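/- Let (A,Λ) be any associative form ring with 1, let n ≥ 3, and let (I,Γ), (J,Δ), (K,Θ) be form ideals of (A,Λ). Then [[EU(2n,I,Γ), EU(2n,J,Δ)], EU(2n,K,Θ)] = [EU(2n,(I,Γ)∘(J,Δ)), EU(2n,K,Θ)]. -/

import Mathlib

open Matrix
open scoped commutatorElement

/-- Bak's form ring data on a ring `A`: an involution `bar`, a central symmetry
`λ` with `λ λ̄ = 1`, and a form parameter `Λ`. -/
structure FormRingData (A : Type*) [Ring A] where
  bar : A →+ A
  bar_mul : ∀ a b : A, bar (a * b) = bar b * bar a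
  bar_bar : ∀ a : A, bar (bar a) = a
  lam : A
  lam_comm : ∀ a : A, lam * a = a * lam
  lam_bar : lam * bar lam = 1
  Lambda : AddSubgroup A
  lambdaMin_mem : ∀ c : A, c - lam * bar c ∈ Lambda
  lambdaMax_mem : ∀ x ∈ Lambda, x = -(lam * bar x)
  lambda_conj : ∀ (c : A), ∀ x ∈ Lambda, c * x * bar c ∈ Lambda

namespace FormRingData

variable {A : Type*} [Ring A]

/-- Integral powers of the symmetry `λ`; negative powers use `λ̄ = λ⁻¹`. -/
def lpow (D : FormRingData A) (k : ℤ) : A :=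
  if 0 ≤ k then D.lam ^ k.toNat else (D.bar D.lam) ^ (-k).toNat

end FormRingData

/-- The index set `Ω = {1,…,n,−n,…,−1}`, coded as `Fin n × Bool`
(second component `true` = positive index). -/
abbrev Idx (n : ℕ) := Fin n × Bool

namespace Idx

/-- The involution `i ↦ −i` on indices. -/
def neg {n : ℕ} (i : Idx n) : Idx n := (i.1, !i.2)

/-- The sign `ε(i) ∈ {±1}`. -/
def eps {n : ℕ} (i : Idx n) : ℤ := if i.2 then 1 else -1

theorem neg_ne {n : ℕ} (i : Idx n) : neg i ≠ i := by
  simp [neg, Prod.ext_iff]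

theorem neg_injective {n : ℕ} : Function.Injective (neg (n := n)) := by
  intro i j h
  simp only [neg, Prod.mk.injEq] at h
  refine Prod.ext h.1 ?_
  have h2 := h.2
  cases hi : i.2 <;> cases hj : j.2 <;> simp_all

theorem neg_neg {n : ℕ} (i : Idx n) : neg (neg i) = i := by
  simp [neg]

end Idx

/-- `GL(2n, A)`, realised as the units of the `Ω × Ω` matrix ring over `A`. -/
abbrev GLn (A : Type*) [Ring A] (n : ℕ) := (Matrix (Idx n) (Idx n) A)ˣ

section aux

theorem one_add_mul_one_sub {R : Type*} [Ring R] {X : R} (h : X * X = 0) :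
    (1 + X) * (1 - X) = 1 := by
  have hh : (1 + X) * (1 - X) = 1 - X * X := by noncomm_ring
  rw [hh, h, sub_zero]

theorem one_sub_mul_one_add {R : Type*} [Ring R] {X : R} (h : X * X = 0) :
    (1 - X) * (1 + X) = 1 := by
  have hh : (1 - X) * (1 + X) = 1 - X * X := by noncomm_ring
  rw [hh, h, sub_zero]

theorem stdBasisMatrix_neg' {A : Type*} [Ring A] {n : ℕ} (i j : Idx n) (c : A) :
    Matrix.single i j (-c) = -Matrix.single i j c := by
  refine eq_neg_of_add_eq_zero_left ?_
  rw [← Matrix.single_add]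
  simp

end aux

namespace FormRingData

variable {A : Type*} [Ring A] {n : ℕ}

/-- The off-diagonal part of a short root element. -/
def Xmat (D : FormRingData A) (i j : Idx n) (c : A) : Matrix (Idx n) (Idx n) A :=
  Matrix.single i j c -
    Matrix.single (Idx.neg j) (Idx.neg i) (D.lpow ((Idx.eps j - Idx.eps i) / 2) * D.bar c)

theorem Xmat_mul (D : FormRingData A) {i j : Idx n} (hij : i ≠ j) (c c' : A) :
    D.Xmat i j c * D.Xmat i j c' = 0 := by
  unfold Xmat
  rw [sub_mul, mul_sub, mul_sub,
    Matrix.single_mul_single_of_ne _ _ _ _ (Ne.symm hij),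
    Matrix.single_mul_single_of_ne _ _ _ _ (Ne.symm (Idx.neg_ne j)),
    Matrix.single_mul_single_of_ne _ _ _ _ (Idx.neg_ne i),
    Matrix.single_mul_single_of_ne _ _ _ _ (fun h => hij (Idx.neg_injective h))]
  simp

theorem Xmat_neg (D : FormRingData A) (i j : Idx n) (c : A) :
    D.Xmat i j (-c) = -D.Xmat i j c := by
  unfold Xmat
  rw [map_neg, mul_neg, stdBasisMatrix_neg', stdBasisMatrix_neg']
  abel

/-- The elementary short root unipotent `T_{ij}(c)`, for `i ≠ ±j`
(with junk value `1` when `i = j`). -/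
def TS (D : FormRingData A) (i j : Idx n) (c : A) : GLn A n :=
  if h : i = j then 1 else
    { val := 1 + D.Xmat i j c
      inv := 1 + D.Xmat i j (-c)
      val_inv := by
        rw [D.Xmat_neg, ← sub_eq_add_neg]
        exact one_add_mul_one_sub (D.Xmat_mul h c c)
      inv_val := by
        rw [D.Xmat_neg, ← sub_eq_add_neg]
        exact one_sub_mul_one_add (D.Xmat_mul h c c) }

/-- The elementary long root unipotent `T_{i,−i}(c)`. -/
def TL (D : FormRingData A) (i : Idx n) (c : A) : GLn A n where
  val := 1 + Matrix.single i (Idx.neg i) c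
  inv := 1 + Matrix.single i (Idx.neg i) (-c)
  val_inv := by
    rw [stdBasisMatrix_neg', ← sub_eq_add_neg]
    exact one_add_mul_one_sub (Matrix.single_mul_single_of_ne _ _ _ _ (Idx.neg_ne i) _)
  inv_val := by
    rw [stdBasisMatrix_neg', ← sub_eq_add_neg]
    exact one_sub_mul_one_add (Matrix.single_mul_single_of_ne _ _ _ _ (Idx.neg_ne i) _)

/-- The elementary unitary transvection `T_{ij}(c)` (long or short root type
according to whether `j = −i`). -/
def T (D : FormRingData A) (i j : Idx n) (c : A) : GLn A n :=
  if j = Idx.neg i then D.TL i c else D.TS i j c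

/-- The elementary commutator `Y_{ij}(a,b) = [T_{ij}(a), T_{ji}(b)]`. -/
def Y (D : FormRingData A) (i j : Idx n) (a b : A) : GLn A n :=
  ⁅D.T i j a, D.T j i b⁆

/-- The elementary conjugate `Z_{ij}(a,c) = T_{ji}(c) T_{ij}(a) T_{ji}(−c)`. -/
def Z (D : FormRingData A) (i j : Idx n) (a c : A) : GLn A n :=
  D.T j i c * D.T i j a * D.T j i (-c)

/-- The set of elementary unitary transvections of level `(I,Γ)`. -/
def transvGen (D : FormRingData A) (n : ℕ) (I Γ : AddSubgroup A) : Set (GLn A n) :=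
  {x | ∃ i j : Idx n, i ≠ j ∧ i ≠ Idx.neg j ∧ ∃ c ∈ I, x = D.TS i j c} ∪
    {x | ∃ i : Idx n, ∃ g ∈ Γ, x = D.TL i (D.lpow (-(Idx.eps i + 1) / 2) * g)}

/-- The unrelative elementary subgroup `FU(2n, I, Γ)`. -/
def FU (D : FormRingData A) (n : ℕ) (I Γ : AddSubgroup A) : Subgroup (GLn A n) :=
  Subgroup.closure (D.transvGen n I Γ)

/-- The absolute elementary unitary group `EU(2n, A, Λ)`. -/
def EUmax (D : FormRingData A) (n : ℕ) : Subgroup (GLn A n) :=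
  D.FU n ⊤ D.Lambda

/-- The relative elementary subgroup `EU(2n, I, Γ)`: the normal closure of
`FU(2n, I, Γ)` in `EU(2n, A, Λ)`. -/
def EU (D : FormRingData A) (n : ℕ) (I Γ : AddSubgroup A) : Subgroup (GLn A n) :=
  Subgroup.closure {x | ∃ g ∈ D.EUmax n, ∃ t ∈ D.transvGen n I Γ, x = g * t * g⁻¹}

/-- The additive subgroup generated by products `st`, `s ∈ S`, `t ∈ T`. -/
def mulSub (S T : AddSubgroup A) : AddSubgroup A :=
  AddSubgroup.closure {x | ∃ a ∈ S, ∃ b ∈ T, x = a * b}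

/-- The symmetrised product `ST + TS` of two (additive subgroups underlying)
two-sided ideals. -/
def symI (S T : AddSubgroup A) : AddSubgroup A :=
  mulSub S T ⊔ mulSub T S

/-- The minimal relative form parameter `Γ_min(K)` of level `K`. -/
def gammaMin (D : FormRingData A) (K : AddSubgroup A) : AddSubgroup A :=
  AddSubgroup.closure
    ({x | ∃ a ∈ K, x = a - D.lam * D.bar a} ∪
      {x | ∃ a ∈ K, ∃ c ∈ D.Lambda, x = a * c * D.bar a})

/-- The relative form parameter `ˢΓ = ⟨ b γ b̄ ∣ b ∈ S, γ ∈ Γ ⟩`. -/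
def conjPar (D : FormRingData A) (S Γ : AddSubgroup A) : AddSubgroup A :=
  AddSubgroup.closure {x | ∃ b ∈ S, ∃ g ∈ Γ, x = b * g * D.bar b}

/-- The relative form parameter of the symmetrised product
`(I,Γ)∘(J,Δ) = (IJ+JI, Γ_min(IJ+JI) + ᴶΓ + ᴵΔ)`. -/
def symG (D : FormRingData A) (I Γ J Δ : AddSubgroup A) : AddSubgroup A :=
  D.gammaMin (symI I J) ⊔ D.conjPar J Γ ⊔ D.conjPar I Δ

/-- The elementary subgroup `EU(2n, (I,Γ)∘(J,Δ))` of the symmetrised product. -/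
def EUsym (D : FormRingData A) (n : ℕ) (I Γ J Δ : AddSubgroup A) : Subgroup (GLn A n) :=
  D.EU n (symI I J) (D.symG I Γ J Δ)

/-- Position-dependent membership `a ∈ (I,Γ)` at position `(i,j)`:
`a ∈ I` for a short root position, `a ∈ λ^{−(ε(i)+1)/2}Γ` for a long one. -/
def pmem (D : FormRingData A) (I Γ : AddSubgroup A) {n : ℕ} (i j : Idx n) (a : A) : Prop :=
  if j = Idx.neg i then ∃ g ∈ Γ, a = D.lpow (-(Idx.eps i + 1) / 2) * g else a ∈ I

end FormRingData

/-- A form ideal `(I,Γ)` of the form ring `(A,Λ)`. -/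
structure FormIdeal {A : Type*} [Ring A] (D : FormRingData A) where
  I : AddSubgroup A
  Gamma : AddSubgroup A
  mul_mem_left : ∀ (c : A), ∀ x ∈ I, c * x ∈ I
  mul_mem_right : ∀ (c : A), ∀ x ∈ I, x * c ∈ I
  bar_mem : ∀ x ∈ I, D.bar x ∈ I
  gammaMin_le : D.gammaMin I ≤ Gamma
  gamma_le_I : Gamma ≤ I
  gamma_le_Lambda : Gamma ≤ D.Lambda
  gamma_conj : ∀ (c : A), ∀ x ∈ Gamma, c * x * D.bar c ∈ Gamma

/-!
Let `L` be the relative elementary group of level `(I,Γ) ∘ (J,Δ)`. The elementary group `E` is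
generated by its root subgroups off any given line `ℤβ`. Such a generator, for a root `γ`, moves
an elementary commutator `[x, y]`, with `x` in the `β`-root subgroup of level `(I,Γ)` and `y` in
the `(-β)`-root subgroup of level `(J,Δ)`, only by factors from roots in the open half-plane
spanned by `γ` and `±β`; modulo `L` these commute with everything involved, so `[x, y]` is central
in `E` modulo `L`.

The group of level `(J,Δ)` is generated by the conjugates of its `β`-root elements by elements of
the opposite root subgroups of `E`, which reduces `[EU(I,Γ), EU(J,Δ)]` to `L` and the elementary
commutators. Finally, for `[x, y]` central modulo `L`, the elements of `EU(K,Θ)` commuting with it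
modulo `[L, EU(K,Θ)]` form a normal subgroup of `E`. So one short and one long root subgroup of
level `(K,Θ)` are enough to check, and they can be chosen almost orthogonal to `β`.
-/
section CommutatorMod

variable {G : Type*} [Group G] {M : Subgroup G}

/-- The subgroup of those elements normalising `M` which commute with `y` modulo `M`. The
normalising condition makes it a subgroup when `M` is not normal. -/
def centralizerMod (M : Subgroup G) (y : G) : Subgroup G where
  carrier := {g | g ∈ Subgroup.normalizer M ∧ ⁅g, y⁆ ∈ M}
  one_mem' := ⟨one_mem _, by simp only [commutatorElement_one_left, one_mem]⟩
  mul_mem' := by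
    rintro a b ⟨ha, hay⟩ ⟨hb, hby⟩
    refine ⟨mul_mem ha hb, ?_⟩
    rw [commutatorElement_mul_left_eq_conj_mul]
    exact mul_mem ((Subgroup.mem_normalizer_iff.1 ha _).1 hby) hay
  inv_mem' := by
    rintro a ⟨ha, hay⟩
    refine ⟨inv_mem ha, ?_⟩
    rw [commutatorElement_inv_left, ← commutatorElement_inv]
    exact (Subgroup.mem_normalizer_iff''.1 ha _).1 (inv_mem hay)

theorem mem_centralizerMod_iff [M.Normal] {g y : G} : g ∈ centralizerMod M y ↔ ⁅g, y⁆ ∈ M :=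
  and_iff_right (Subgroup.normalizer_eq_top M ▸ Subgroup.mem_top g)

theorem commutatorElement_mem_comm {x y : G} : ⁅x, y⁆ ∈ M ↔ ⁅y, x⁆ ∈ M := by
  rw [← commutatorElement_inv, inv_mem_iff]

theorem conj_mem_iff_of_commutatorElement_mem {g x : G} (h : ⁅g, x⁆ ∈ M) :
    g * x * g⁻¹ ∈ M ↔ x ∈ M := by
  rw [← MulAut.conj_apply, conj_eq_commutatorElement_mul, mul_mem_cancel_left h]

theorem commutator_le_iff_le_centralizerMod [M.Normal] {H K : Subgroup G} :
    ⁅H, K⁆ ≤ M ↔ ∀ y ∈ K, H ≤ centralizerMod M y := by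
  rw [Subgroup.commutator_le]
  exact ⟨fun h y hy x hx => mem_centralizerMod_iff.2 (h x hx y hy),
    fun h x hx y hy => mem_centralizerMod_iff.1 (h y hy hx)⟩

theorem commutatorElement_mul_mul_of_commute {x y f f' : G} (hfy : Commute f y)
    (hff' : Commute f f') (hxf' : Commute x f') : ⁅x * f, y * f'⁆ = ⁅x, y⁆ := by
  rw [commutatorElement_mul_left_eq_conj_mul, (hfy.mul_right hff').commutator_eq,
    commutatorElement_mul_right_eq_mul_conj, hxf'.commutator_eq]
  simp only [mul_one, mul_inv_cancel, one_mul, mul_inv_cancel_right]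

theorem commutatorElement_mem_iff_commute [M.Normal] {x y : G} :
    ⁅x, y⁆ ∈ M ↔ Commute (x : G ⧸ M) (y : G ⧸ M) := by
  rw [← QuotientGroup.eq_one_iff, ← commutatorElement_eq_one_iff_commute]
  rfl

/-- Conjugation by `g` multiplies `x` and `y` by `⁅x⁻¹, g⁆` and `⁅y⁻¹, g⁆`, and these factors do
not change `⁅x, y⁆` modulo `M`. -/
theorem commutatorElement_commutatorElement_mem [M.Normal] {g x y : G}
    (hgy : ⁅⁅x⁻¹, g⁆, y⁆ ∈ M) (hgg : ⁅⁅x⁻¹, g⁆, ⁅y⁻¹, g⁆⁆ ∈ M) (hxg : ⁅x, ⁅y⁻¹, g⁆⁆ ∈ M) :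
    ⁅g, ⁅x, y⁆⁆ ∈ M := by
  rw [commutatorElement_mem_iff_commute] at hgy hgg hxg
  have hx : x * ⁅x⁻¹, g⁆ = g * x * g⁻¹ := by simp [commutatorElement_def, mul_assoc]
  have hy : y * ⁅y⁻¹, g⁆ = g * y * g⁻¹ := by simp [commutatorElement_def, mul_assoc]
  have hmod := commutatorElement_mul_mul_of_commute hgy hgg hxg
  rw [← QuotientGroup.mk_mul, ← QuotientGroup.mk_mul, hx, hy] at hmod
  rw [← QuotientGroup.eq_one_iff, commutatorElement_def, conjugate_commutatorElement,
    QuotientGroup.mk_mul, QuotientGroup.mk_inv, mul_inv_eq_one]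
  exact hmod

theorem commutatorElement_conj_right {x c b : G} :
    ⁅x, c * b * c⁻¹⁆ = c * ⁅c⁻¹ * x * c, b⁆ * c⁻¹ := by
  simp [commutatorElement_def, mul_assoc]

theorem commutatorElement_conj_left {x c b : G} :
    ⁅c * b * c⁻¹, x⁆ = c * ⁅b, c⁻¹ * x * c⁆ * c⁻¹ := by
  simp [commutatorElement_def, mul_assoc]

theorem commutator_normalClosure_le [M.Normal] {H K : Subgroup G} [K.Normal] (h : ⁅H, K⁆ ≤ M) :
    ⁅Subgroup.normalClosure (H : Set G), K⁆ ≤ M := by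
  refine commutator_le_iff_le_centralizerMod.2 fun q hq => (Subgroup.closure_le _).2 fun z hz => ?_
  obtain ⟨x, hx, hxz⟩ := Group.mem_conjugatesOfSet_iff.1 hz
  obtain ⟨g, rfl⟩ := isConj_iff.1 hxz
  refine mem_centralizerMod_iff.2 ?_
  rw [commutatorElement_conj_left]
  exact Subgroup.Normal.conj_mem inferInstance _ (Subgroup.commutator_le.1 h x hx _
    (Subgroup.Normal.conj_mem' inferInstance q hq g)) g

theorem normal_inf_centralizerMod {L R : Subgroup G} [R.Normal] [M.Normal] (hLR : ⁅L, R⁆ ≤ M)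
    {y : G} (hy : ∀ g : G, ⁅g, y⁆ ∈ L) : (R ⊓ centralizerMod M y).Normal := by
  refine ⟨fun x hx g => ?_⟩
  rw [Subgroup.mem_inf, mem_centralizerMod_iff, commutatorElement_mem_comm] at hx ⊢
  refine ⟨Subgroup.Normal.conj_mem inferInstance x hx.1 g, ?_⟩
  have hgyx : ⁅⁅g⁻¹, y⁆, x⁆ ∈ M := hLR (Subgroup.commutator_mem_commutator (hy _) hx.1)
  have hconj : ⁅y, g * x * g⁻¹⁆ =
      g * (⁅g⁻¹, y⁆ * ⁅y, x⁆ * ⁅g⁻¹, y⁆⁻¹ * ⁅⁅g⁻¹, y⁆, x⁆) * g⁻¹ := by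
    simp [commutatorElement_def, mul_assoc]
  rw [hconj]
  exact Subgroup.Normal.conj_mem inferInstance _
    (mul_mem (Subgroup.Normal.conj_mem inferInstance _ hx.2 _) hgyx) g

end CommutatorMod

section Factorisation

variable {G : Type*} [Group G] {P Q R : Subgroup G} {w : G}

theorem exists_mul_of_mem_sup (hPQ : ⁅P, Q⁆ ≤ Q) (hw : w ∈ P ⊔ Q) :
    ∃ a ∈ P, ∃ b ∈ Q, a * b = w := by
  rwa [← SetLike.mem_coe, Subgroup.coe_mul_of_left_le_normalizer_right _ _
    (Subgroup.le_normalizer_iff_commutator_le_right.2 hPQ)] at hw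

theorem exists_mul_mul_of_mem_sup (hPQ : ⁅P, Q⁆ ≤ R) (hPR : ⁅P, R⁆ ≤ R) (hQR : ⁅Q, R⁆ ≤ R)
    (hw : w ∈ P ⊔ (Q ⊔ R)) : ∃ a ∈ P, ∃ b ∈ Q, ∃ c ∈ R, a * (b * c) = w := by
  have hP : ⁅P, Q ⊔ R⁆ ≤ Q ⊔ R := by
    refine Subgroup.le_normalizer_iff_commutator_le_right.1
      (Subgroup.le_normalizer_iff.2 fun g hg x hx => ?_)
    suffices h : Q ⊔ R ≤ (Q ⊔ R).comap (MulAut.conj g).toMonoidHom from h hx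
    refine sup_le (fun q hq => ?_) fun r hr => ?_ <;>
      refine (conj_mem_iff_of_commutatorElement_mem (SetLike.le_def.1 le_sup_right ?_)).2 ?_
    · exact hPQ (Subgroup.commutator_mem_commutator hg hq)
    · exact SetLike.le_def.1 le_sup_left hq
    · exact hPR (Subgroup.commutator_mem_commutator hg hr)
    · exact SetLike.le_def.1 le_sup_right hr
  obtain ⟨a, ha, _, hbc, rfl⟩ := exists_mul_of_mem_sup hP hw
  obtain ⟨b, hb, c, hc, rfl⟩ := exists_mul_of_mem_sup hQR hbc
  exact ⟨a, ha, b, hb, c, hc, rfl⟩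

end Factorisation

section RootSpan

variable {G V : Type*} [Group G]

/-- The subgroup generated by the members of a family `X` of root subgroups indexed by `S`. -/
def rootSpan (X : V → Subgroup G) (S : Set V) : Subgroup G := ⨆ v ∈ S, X v

variable {X Y Z : V → Subgroup G} {S T : Set V} {H M : Subgroup G}

theorem le_rootSpan {v : V} (hv : v ∈ S) : X v ≤ rootSpan X S := le_iSup₂_of_le v hv le_rfl

theorem rootSpan_le : rootSpan X S ≤ H ↔ ∀ v ∈ S, X v ≤ H := iSup₂_le_iff

theorem rootSpan_mono (h : S ⊆ T) : rootSpan X S ≤ rootSpan X T :=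
  rootSpan_le.2 fun _ hv => le_rootSpan (h hv)

theorem conj_mem_of_mem_rootSpan {g x : G} (h : ∀ v ∈ S, ∀ x ∈ X v, g * x * g⁻¹ ∈ H)
    (hx : x ∈ rootSpan X S) : g * x * g⁻¹ ∈ H :=
  (rootSpan_le.2 h : rootSpan X S ≤ H.comap (MulAut.conj g).toMonoidHom) hx

theorem commutator_rootSpan_le_left [M.Normal] (h : ∀ v ∈ S, ⁅X v, H⁆ ≤ M) :
    ⁅rootSpan X S, H⁆ ≤ M :=
  commutator_le_iff_le_centralizerMod.2 fun y hy =>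
    rootSpan_le.2 fun v hv => commutator_le_iff_le_centralizerMod.1 (h v hv) y hy

theorem commutator_rootSpan_le_right [M.Normal] (h : ∀ v ∈ S, ⁅H, X v⁆ ≤ M) :
    ⁅H, rootSpan X S⁆ ≤ M := by
  rw [Subgroup.commutator_comm]
  exact commutator_rootSpan_le_left fun v hv => Subgroup.commutator_comm H (X v) ▸ h v hv

end RootSpan

section HalfPlanes

variable {G V : Type*} [Group G] [AddCommGroup V] {Φ : Set V} {α β γ u v : V}

/-- The roots which are positive integral combinations of `α` and `β`. -/
def posComb (Φ : Set V) (α β : V) : Set V :=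
  {v ∈ Φ | ∃ m k : ℤ, 0 < m ∧ 0 < k ∧ v = m • α + k • β}

/-- The roots of the plane spanned by `γ` and `β` on the side of `γ` of the line through `β`. -/
def openHalf (Φ : Set V) (γ β : V) : Set V :=
  {v ∈ Φ | ∃ i j : ℤ, 0 < i ∧ v = i • γ + j • β}

/-- The union of `openHalf Φ γ β` and of the roots on the line through `β`. -/
def closedHalf (Φ : Set V) (γ β : V) : Set V :=
  {v ∈ Φ | ∃ i j : ℤ, 0 ≤ i ∧ v = i • γ + j • β}

theorem posComb_subset : posComb Φ α β ⊆ Φ := Set.sep_subset _ _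

theorem openHalf_subset : openHalf Φ γ β ⊆ Φ := Set.sep_subset _ _

theorem openHalf_subset_closedHalf : openHalf Φ γ β ⊆ closedHalf Φ γ β :=
  fun _ ⟨hv, i, j, hi, hvij⟩ => ⟨hv, i, j, hi.le, hvij⟩

theorem mem_openHalf_self (hγ : γ ∈ Φ) : γ ∈ openHalf Φ γ β :=
  ⟨hγ, 1, 0, one_pos, by module⟩

theorem mem_closedHalf_right (hβ : β ∈ Φ) : β ∈ closedHalf Φ γ β :=
  ⟨hβ, 0, 1, le_rfl, by module⟩

theorem neg_mem_closedHalf_right (hβ : -β ∈ Φ) : -β ∈ closedHalf Φ γ β :=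
  ⟨hβ, 0, -1, le_rfl, by module⟩

theorem posComb_comm : posComb Φ α β = posComb Φ β α := by
  ext v
  constructor <;> rintro ⟨hv, m, k, hm, hk, rfl⟩ <;> exact ⟨hv, k, m, hk, hm, add_comm _ _⟩

theorem posComb_subset_openHalf (hu : u ∈ closedHalf Φ γ β) (hv : v ∈ openHalf Φ γ β) :
    posComb Φ u v ⊆ openHalf Φ γ β := by
  obtain ⟨-, i, j, hi, rfl⟩ := hu
  obtain ⟨-, i', j', hi', rfl⟩ := hv
  rintro w ⟨hw, m, k, hm, hk, rfl⟩
  exact ⟨hw, m * i + k * i', m * j + k * j', by positivity, by module⟩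

theorem add_ne_zero_of_mem_openHalf (hγβ : ∀ i j : ℤ, 0 < i → i • γ + j • β ≠ 0)
    (hu : u ∈ closedHalf Φ γ β) (hv : v ∈ openHalf Φ γ β) : u + v ≠ 0 := by
  obtain ⟨-, i, j, hi, rfl⟩ := hu
  obtain ⟨-, i', j', hi', rfl⟩ := hv
  convert hγβ (i + i') (j + j') (by lia) using 1
  module

/-- Chevalley's commutator formula: `⁅X α, Y β⁆` involves only the positive combinations of `α`
and `β`. -/
def ChevalleyRel (Φ : Set V) (X Y : V → Subgroup G) : Prop :=
  ∀ α ∈ Φ, ∀ β ∈ Φ, α + β ≠ 0 → ⁅X α, Y β⁆ ≤ rootSpan Y (posComb Φ α β)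

variable {X Y : V → Subgroup G}

theorem ChevalleyRel.commutator_le_openHalf (hXY : ChevalleyRel Φ X Y)
    (hγβ : ∀ i j : ℤ, 0 < i → i • γ + j • β ≠ 0) (hu : u ∈ closedHalf Φ γ β)
    (hv : v ∈ openHalf Φ γ β) : ⁅X u, Y v⁆ ≤ rootSpan Y (openHalf Φ γ β) :=
  (hXY u hu.1 v hv.1 (add_ne_zero_of_mem_openHalf hγβ hu hv)).trans
    (rootSpan_mono (posComb_subset_openHalf hu hv))

theorem ChevalleyRel.closedHalf_le_normalizer (hXY : ChevalleyRel Φ X Y)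
    (hγβ : ∀ i j : ℤ, 0 < i → i • γ + j • β ≠ 0) :
    rootSpan X (closedHalf Φ γ β) ≤ Subgroup.normalizer (rootSpan Y (openHalf Φ γ β)) := by
  refine rootSpan_le.2 fun u hu => Subgroup.le_normalizer_iff.2 fun g hg y hy => ?_
  refine conj_mem_of_mem_rootSpan (fun v hv z hz => ?_) hy
  refine (conj_mem_iff_of_commutatorElement_mem ?_).2 (le_rootSpan hv hz)
  exact hXY.commutator_le_openHalf hγβ hu hv (Subgroup.commutator_mem_commutator hg hz)

theorem ChevalleyRel.conj_mem_openHalf (hXY : ChevalleyRel Φ X Y)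
    (hγβ : ∀ i j : ℤ, 0 < i → i • γ + j • β ≠ 0) (hu : u ∈ closedHalf Φ γ β) {g y : G}
    (hg : g ∈ X u) (hy : y ∈ rootSpan Y (openHalf Φ γ β)) :
    g * y * g⁻¹ ∈ rootSpan Y (openHalf Φ γ β) :=
  Subgroup.le_normalizer_iff.1 (hXY.closedHalf_le_normalizer hγβ) g (le_rootSpan hu hg) y hy

theorem ChevalleyRel.commutator_openHalf_le (hXY : ChevalleyRel Φ X Y)
    (hγβ : ∀ i j : ℤ, 0 < i → i • γ + j • β ≠ 0) (hu : u ∈ closedHalf Φ γ β) :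
    ⁅rootSpan X (openHalf Φ γ β), Y u⁆ ≤ rootSpan Y (openHalf Φ γ β) := by
  refine Subgroup.commutator_le.2 fun g hg y hy => ?_
  suffices h : rootSpan X (openHalf Φ γ β) ≤ centralizerMod (rootSpan Y (openHalf Φ γ β)) y from
    (h hg).2
  refine rootSpan_le.2 fun v hv x hx => ⟨?_, ?_⟩
  · exact hXY.closedHalf_le_normalizer hγβ (le_rootSpan (openHalf_subset_closedHalf hv) hx)
  · refine rootSpan_mono (posComb_subset_openHalf hu hv) ?_
    rw [posComb_comm]
    refine hXY v hv.1 u hu.1 ?_ (Subgroup.commutator_mem_commutator hx hy)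
    rw [add_comm]
    exact add_ne_zero_of_mem_openHalf hγβ hu hv

end HalfPlanes

section RelRootGroups

variable {G V : Type*} [Group G] [AddCommGroup V] {Φ : Set V} {X Y Z : V → Subgroup G} {α β γ : V}

/-- The roots off the line through `β`. -/
def offLine (Φ : Set V) (β : V) : Set V := {v ∈ Φ | v ≠ β ∧ v ≠ -β}

theorem offLine_neg : offLine Φ (-β) = offLine Φ β := by
  ext v
  simp only [offLine, Set.mem_sep_iff, neg_neg, and_comm (a := v ≠ β)]

/-- The form in which the rank enters the argument: up to roots off the line through `β`, the group
`Y β` is conjugate to a `Y ε`, by an element `x₀ ∈ X δ` whose conjugates under `X β` and `X (-β)`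
can be factored relative to any root `σ` in the half-plane of `ε`. -/
def HasSplitting (Φ : Set V) (X Y : V → Subgroup G) (β : V) : Prop :=
  ∃ δ ∈ offLine Φ β, ∃ ε ∈ offLine Φ β, ∃ x₀ ∈ X δ,
    (∀ y ∈ Y β, ∃ e ∈ Y ε, ∃ r ∈ rootSpan Y (offLine Φ β), y = x₀ * e * x₀⁻¹ * r) ∧
    ∀ σ ∈ openHalf Φ ε β, ∀ w ∈ rootSpan X (openHalf Φ δ β),
      ∃ γ₁ ∈ offLine Φ σ, ∃ γ₂ ∈ offLine Φ σ, ∃ x₁ ∈ X γ₁, ∃ x₂ ∈ X γ₂, ∃ x₃ ∈ X (-σ),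
        w = x₁ * x₂ * x₃

/-- Root subgroups `Y` of some level inside the root subgroups `X` of a group `G` of rank at
least two. -/
structure RelRootGroups (Φ : Set V) (X Y : V → Subgroup G) : Prop where
  neg_mem : ∀ v ∈ Φ, -v ∈ Φ
  indep : ∀ β ∈ Φ, ∀ γ ∈ offLine Φ β, ∀ i j : ℤ, 0 < i → i • γ + j • β ≠ 0
  le : ∀ v, Y v ≤ X v
  chevalley_ambient : ChevalleyRel Φ X X
  chevalley : ChevalleyRel Φ X Y
  commute : ∀ v ∈ Φ, ∀ x ∈ X v, ∀ y ∈ X v, Commute x y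
  generate : rootSpan X Φ = ⊤
  hasSplitting : ∀ β ∈ Φ, HasSplitting Φ X Y β

/-- The subgroup generated by the conjugates of the `Z β` under the opposite root subgroups. -/
def rootConjugates (Φ : Set V) (X Z : V → Subgroup G) : Subgroup G :=
  Subgroup.closure {z | ∃ β ∈ Φ, ∃ c ∈ X (-β), ∃ b ∈ Z β, z = c * b * c⁻¹}

/-- The subgroup generated by the elementary commutators, those between opposite root
subgroups. -/
def elemCommutators (Φ : Set V) (Y Z : V → Subgroup G) : Subgroup G :=
  rootSpan (fun β => ⁅Y β, Z (-β)⁆) Φ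

theorem mem_rootConjugates {b c : G} (hβ : β ∈ Φ) (hc : c ∈ X (-β)) (hb : b ∈ Z β) :
    c * b * c⁻¹ ∈ rootConjugates Φ X Z :=
  Subgroup.subset_closure ⟨β, hβ, c, hc, b, hb, rfl⟩

theorem rootSpan_le_rootConjugates : rootSpan Z Φ ≤ rootConjugates Φ X Z :=
  rootSpan_le.2 fun β hβ b hb => by simpa using mem_rootConjugates hβ (one_mem (X (-β))) hb

namespace RelRootGroups

theorem rootSpan_offLine (hX : RelRootGroups Φ X X) (hβ : β ∈ Φ) :
    rootSpan X (offLine Φ β) = ⊤ := by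
  have hle : ∀ α ∈ Φ, X α ≤ rootSpan X (offLine Φ α) := by
    intro α hα y hy
    obtain ⟨δ, hδ, ε, hε, x₀, hx₀, hfactor, -⟩ := hX.hasSplitting α hα
    obtain ⟨e, he, r, hr, rfl⟩ := hfactor y hy
    have hx₀ := le_rootSpan hδ hx₀
    exact mul_mem (mul_mem (mul_mem hx₀ (le_rootSpan hε he)) (inv_mem hx₀)) hr
  rw [eq_top_iff, ← hX.generate]
  refine rootSpan_le.2 fun α hα => ?_
  rcases eq_or_ne α β with rfl | hαβ
  · exact hle α hα
  rcases eq_or_ne α (-β) with rfl | hαβ'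
  · exact offLine_neg (Φ := Φ) ▸ hle (-β) hα
  · exact le_rootSpan ⟨hα, hαβ, hαβ'⟩

theorem commutator_conj_le_openHalf (hZ : RelRootGroups Φ X Z) (hβ : β ∈ Φ)
    (hγ : γ ∈ offLine Φ β) {g b c : G} (hg : g ∈ X γ) (hc : c ∈ X (-β)) (hb : b ∈ Z β) :
    ⁅g, c * b * c⁻¹⁆ ∈ rootSpan Z (openHalf Φ γ β) := by
  have hγβ := hZ.indep β hβ γ hγ
  have hneg := neg_mem_closedHalf_right (γ := γ) (hZ.neg_mem β hβ)
  have hconj := hZ.chevalley_ambient.conj_mem_openHalf hγβ hneg (inv_mem hc)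
    (le_rootSpan (mem_openHalf_self hγ.1) hg)
  rw [inv_inv] at hconj
  rw [commutatorElement_conj_right]
  exact hZ.chevalley.conj_mem_openHalf hγβ hneg hc (Subgroup.commutator_le.1
    (hZ.chevalley.commutator_openHalf_le hγβ (mem_closedHalf_right hβ)) _ hconj b hb)

theorem conj_rootSpan_mem_rootConjugates (hZ : RelRootGroups Φ X Z) (hγ : γ ∈ Φ) {g z : G}
    (hg : g ∈ X γ) (hz : z ∈ rootSpan Z Φ) : g * z * g⁻¹ ∈ rootConjugates Φ X Z := by
  refine conj_mem_of_mem_rootSpan (fun β hβ b hb => ?_) hz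
  by_cases hγβ : γ + β = 0
  · obtain rfl := eq_neg_of_add_eq_zero_left hγβ
    exact mem_rootConjugates hβ hg hb
  · refine rootSpan_le_rootConjugates
      ((conj_mem_iff_of_commutatorElement_mem ?_).2 (le_rootSpan hβ hb))
    exact rootSpan_mono posComb_subset
      (hZ.chevalley γ hγ β hβ hγβ (Subgroup.commutator_mem_commutator hg hb))

theorem conj_offLine_mem_openHalf (hZ : RelRootGroups Φ X Z) (hβ : β ∈ Φ) (hγ : γ ∈ offLine Φ β)
    {c d z : G} (hc : c ∈ X (-β)) (hd : d ∈ X β) (hz : z ∈ Z γ) :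
    d * c * z * (d * c)⁻¹ ∈ rootSpan Z (openHalf Φ γ β) := by
  have hγβ := hZ.indep β hβ γ hγ
  have hconj := hZ.chevalley.conj_mem_openHalf hγβ (mem_closedHalf_right hβ) hd
    (hZ.chevalley.conj_mem_openHalf hγβ (neg_mem_closedHalf_right (hZ.neg_mem β hβ)) hc
      (le_rootSpan (mem_openHalf_self hγ.1) hz))
  simpa [mul_assoc] using hconj

theorem conj_mul_mul_mem_rootConjugates (hZ : RelRootGroups Φ X Z) {σ γ₁ γ₂ : V} (hσ : σ ∈ Φ)
    (hγ₁ : γ₁ ∈ offLine Φ σ) (hγ₂ : γ₂ ∈ offLine Φ σ) {x₁ x₂ x₃ z : G} (hx₁ : x₁ ∈ X γ₁)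
    (hx₂ : x₂ ∈ X γ₂) (hx₃ : x₃ ∈ X (-σ)) (hz : z ∈ Z σ) :
    x₁ * x₂ * x₃ * z * (x₁ * x₂ * x₃)⁻¹ ∈ rootConjugates Φ X Z := by
  have hcomm₁ := hZ.commutator_conj_le_openHalf hσ hγ₁ hx₁ hx₃ hz
  have hcomm₂ := hZ.commutator_conj_le_openHalf hσ hγ₂ hx₂ hx₃ hz
  have hexpand : x₁ * x₂ * x₃ * z * (x₁ * x₂ * x₃)⁻¹ =
      (x₁ * ⁅x₂, x₃ * z * x₃⁻¹⁆ * x₁⁻¹) * ⁅x₁, x₃ * z * x₃⁻¹⁆ * (x₃ * z * x₃⁻¹) := by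
    simp [commutatorElement_def, mul_assoc]
  rw [hexpand]
  exact mul_mem (mul_mem
    (hZ.conj_rootSpan_mem_rootConjugates hγ₁.1 hx₁ (rootSpan_mono openHalf_subset hcomm₂))
    (rootSpan_le_rootConjugates (rootSpan_mono openHalf_subset hcomm₁)))
    (mem_rootConjugates hσ hx₃ hz)

theorem conj_conj_mem_rootConjugates (hX : RelRootGroups Φ X X) (hZ : RelRootGroups Φ X Z)
    (hβ : β ∈ Φ) {b c d : G} (hd : d ∈ X β) (hc : c ∈ X (-β)) (hb : b ∈ Z β) :
    d * (c * b * c⁻¹) * d⁻¹ ∈ rootConjugates Φ X Z := by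
  obtain ⟨δ, hδ, ε, hε, x₀, hx₀, hfactor, hdecomp⟩ := hZ.hasSplitting β hβ
  obtain ⟨e, he, r, hr, rfl⟩ := hfactor b hb
  set g := d * c with hg
  set w := g * x₀ * g⁻¹ with hw
  have hgr : g * r * g⁻¹ ∈ rootConjugates Φ X Z :=
    conj_mem_of_mem_rootSpan (fun ν hν z hz => rootSpan_le_rootConjugates
      (rootSpan_mono openHalf_subset (hZ.conj_offLine_mem_openHalf hβ hν hc hd hz))) hr
  have hgx₀ := hX.conj_offLine_mem_openHalf hβ hδ hc hd hx₀
  have hge := hZ.conj_offLine_mem_openHalf hβ hε hc hd he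
  have hwe : w * (g * e * g⁻¹) * w⁻¹ ∈ rootConjugates Φ X Z := by
    refine conj_mem_of_mem_rootSpan (fun σ hσ z hz => ?_) hge
    obtain ⟨γ₁, hγ₁, γ₂, hγ₂, x₁, hx₁, x₂, hx₂, x₃, hx₃, hwx⟩ := hdecomp σ hσ w hgx₀
    rw [hwx]
    exact hZ.conj_mul_mul_mem_rootConjugates hσ.1 hγ₁ hγ₂ hx₁ hx₂ hx₃ hz
  have hexpand : d * (c * (x₀ * e * x₀⁻¹ * r) * c⁻¹) * d⁻¹ =
      (w * (g * e * g⁻¹) * w⁻¹) * (g * r * g⁻¹) := by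
    simp [hw, hg, mul_assoc]
  rw [hexpand]
  exact mul_mem hwe hgr

theorem normal_rootConjugates (hX : RelRootGroups Φ X X) (hZ : RelRootGroups Φ X Z) :
    (rootConjugates Φ X Z).Normal := by
  rw [← Subgroup.normalizer_eq_top_iff, eq_top_iff, ← hX.generate]
  refine rootSpan_le.2 fun γ hγ g hg => Subgroup.le_normalizer_closure_iff.2 ?_ hg
  rintro g hg _ ⟨β, hβ, c, hc, b, hb, rfl⟩
  rcases eq_or_ne γ β with rfl | hγβ
  · exact hX.conj_conj_mem_rootConjugates hZ hβ hg hc hb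
  rcases eq_or_ne γ (-β) with rfl | hγβ'
  · have hassoc : g * (c * b * c⁻¹) * g⁻¹ = g * c * b * (g * c)⁻¹ := by simp [mul_assoc]
    exact hassoc ▸ mem_rootConjugates hβ (mul_mem hg hc) hb
  · refine (conj_mem_iff_of_commutatorElement_mem ?_).2 (mem_rootConjugates hβ hc hb)
    exact rootSpan_le_rootConjugates (rootSpan_mono openHalf_subset
      (hZ.commutator_conj_le_openHalf hβ ⟨hγ, hγβ, hγβ'⟩ hg hc hb))

section Commutators

variable {L : Subgroup G} [L.Normal] (hX : RelRootGroups Φ X X) (hY : RelRootGroups Φ X Y)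
  (hZ : RelRootGroups Φ X Z) (hL : ∀ α ∈ Φ, ∀ β ∈ Φ, α + β ≠ 0 → ⁅Y α, Z β⁆ ≤ L)
include hX hY hZ hL

theorem commutator_elemCommutators_le : ⁅elemCommutators Φ Y Z, ⊤⁆ ≤ L := by
  refine commutator_rootSpan_le_left fun β hβ => commutator_le_iff_le_centralizerMod.2 fun g _ => ?_
  refine Subgroup.commutator_le.2 fun x hx y hy => ?_
  rw [mem_centralizerMod_iff, commutatorElement_mem_comm, ← mem_centralizerMod_iff]
  suffices h : rootSpan X (offLine Φ β) ≤ centralizerMod L ⁅x, y⁆ from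
    (hX.rootSpan_offLine hβ ▸ h) (Subgroup.mem_top g)
  refine rootSpan_le.2 fun γ hγ g hg => mem_centralizerMod_iff.2 ?_
  have hγβ := hX.indep β hβ γ hγ
  have hβ' := hX.neg_mem β hβ
  have hgγ : g ∈ rootSpan X (openHalf Φ γ β) := le_rootSpan (mem_openHalf_self hγ.1) hg
  have hxg : ⁅x⁻¹, g⁆ ∈ rootSpan Y (openHalf Φ γ β) := commutatorElement_mem_comm.1 <|
    Subgroup.commutator_le.1 (hY.chevalley.commutator_openHalf_le hγβ (mem_closedHalf_right hβ))
      g hgγ _ (inv_mem hx)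
  have hyg : ⁅y⁻¹, g⁆ ∈ rootSpan Z (openHalf Φ γ β) := commutatorElement_mem_comm.1 <|
    Subgroup.commutator_le.1 (hZ.chevalley.commutator_openHalf_le hγβ
      (neg_mem_closedHalf_right hβ')) g hgγ _ (inv_mem hy)
  have hYZ : ∀ v ∈ openHalf Φ γ β, ∀ u ∈ closedHalf Φ γ β, ⁅Y v, Z u⁆ ≤ L := fun v hv u hu =>
    hL v hv.1 u hu.1 (add_comm u v ▸ add_ne_zero_of_mem_openHalf hγβ hu hv)
  have hZY : ∀ u ∈ openHalf Φ γ β, ⁅Y β, Z u⁆ ≤ L := fun u hu =>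
    hL β hβ u hu.1 (add_ne_zero_of_mem_openHalf hγβ (mem_closedHalf_right hβ) hu)
  refine commutatorElement_commutatorElement_mem ?_ ?_ ?_
  · exact Subgroup.commutator_le.1 (commutator_rootSpan_le_left fun v hv =>
      hYZ v hv _ (neg_mem_closedHalf_right hβ')) _ hxg y hy
  · exact Subgroup.commutator_le.1 (commutator_rootSpan_le_left fun v hv =>
      commutator_rootSpan_le_right fun u hu => hYZ v hv u (openHalf_subset_closedHalf hu))
      _ hxg _ hyg
  · exact Subgroup.commutator_le.1 (commutator_rootSpan_le_right hZY) x hx _ hyg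

theorem commutator_sup_elemCommutators_le : ⁅L ⊔ elemCommutators Φ Y Z, ⊤⁆ ≤ L := by
  refine commutator_le_iff_le_centralizerMod.2 fun g hg => sup_le ?_ ?_
  · exact commutator_le_iff_le_centralizerMod.1 (Subgroup.commutator_le_left L ⊤) g hg
  · exact commutator_le_iff_le_centralizerMod.1
      (hX.commutator_elemCommutators_le hY hZ hL) g hg

theorem normal_sup_elemCommutators : (L ⊔ elemCommutators Φ Y Z).Normal :=
  Subgroup.commutator_top_right_le_iff.1
    ((hX.commutator_sup_elemCommutators_le hY hZ hL).trans le_sup_left)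

theorem commutator_rootSpan_le_sup_elemCommutators :
    ⁅rootSpan Y Φ, rootSpan Z Φ⁆ ≤ L ⊔ elemCommutators Φ Y Z := by
  have := hX.normal_sup_elemCommutators hY hZ hL
  refine commutator_rootSpan_le_left fun α hα => commutator_rootSpan_le_right fun β hβ => ?_
  by_cases hαβ : α + β = 0
  · obtain rfl := eq_neg_of_add_eq_zero_right hαβ
    exact (le_rootSpan (X := fun β => ⁅Y β, Z (-β)⁆) hα).trans le_sup_right
  · exact (hL α hα β hβ hαβ).trans le_sup_left

theorem commutatorElement_conj_mem_of_ne (hα : α ∈ Φ) (hβ : β ∈ Φ) (hαβ : α ≠ β) {p b c : G}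
    (hp : p ∈ Y α) (hc : c ∈ X (-β)) (hb : b ∈ Z β) :
    ⁅p, c * b * c⁻¹⁆ ∈ L ⊔ elemCommutators Φ Y Z := by
  have := hX.normal_sup_elemCommutators hY hZ hL
  have hmain := Subgroup.commutator_le.1
    (hX.commutator_rootSpan_le_sup_elemCommutators hY hZ hL)
  rw [commutatorElement_conj_right]
  refine Subgroup.Normal.conj_mem inferInstance _ (hmain _ ?_ b (le_rootSpan hβ hb)) c
  rcases eq_or_ne α (-β) with rfl | hαβ'
  · have hcp : c⁻¹ * p * c = p := by
      rw [(hX.commute _ hα _ (inv_mem hc) _ (hY.le _ hp)).eq, inv_mul_cancel_right]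
    rw [hcp]
    exact le_rootSpan hα hp
  · simpa only [inv_inv] using rootSpan_mono openHalf_subset
      (hY.chevalley.conj_mem_openHalf (hX.indep β hβ α ⟨hα, hαβ, hαβ'⟩)
        (neg_mem_closedHalf_right (hX.neg_mem β hβ)) (inv_mem hc)
        (le_rootSpan (mem_openHalf_self hα) hp))

theorem commutatorElement_conj_mem (hα : α ∈ Φ) (hβ : β ∈ Φ) {p b c : G} (hp : p ∈ Y α)
    (hc : c ∈ X (-β)) (hb : b ∈ Z β) : ⁅p, c * b * c⁻¹⁆ ∈ L ⊔ elemCommutators Φ Y Z := by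
  have hnormal := hX.normal_sup_elemCommutators hY hZ hL
  have hne : ∀ ν ∈ Φ, ν ≠ β → ∀ x ∈ Y ν, ⁅x, c * b * c⁻¹⁆ ∈ L ⊔ elemCommutators Φ Y Z :=
    fun ν hν hνβ x hx => hX.commutatorElement_conj_mem_of_ne hY hZ hL hν hβ hνβ hx hc hb
  by_cases hαβ : α = β
  swap
  · exact hne α hα hαβ p hp
  subst hαβ
  obtain ⟨δ, hδ, ε, hε, x₀, hx₀, hfactor, -⟩ := hY.hasSplitting α hα
  obtain ⟨e, he, r, hr, rfl⟩ := hfactor p hp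
  rw [← mem_centralizerMod_iff]
  refine mul_mem ?_ (rootSpan_le.2 (fun ν hν x hx =>
    mem_centralizerMod_iff.2 (hne ν hν.1 hν.2.1 x hx)) hr)
  rw [mem_centralizerMod_iff]
  set z := c * b * c⁻¹
  have hx₀z : ⁅x₀⁻¹, z⁆ ∈ rootSpan Z Φ := rootSpan_mono openHalf_subset
    (hZ.commutator_conj_le_openHalf hα hδ (inv_mem hx₀) hc hb)
  have hexz : ⁅e, ⁅x₀⁻¹, z⁆⁆ ∈ L ⊔ elemCommutators Φ Y Z := Subgroup.commutator_le.1
    (hX.commutator_rootSpan_le_sup_elemCommutators hY hZ hL) e (le_rootSpan hε.1 he) _ hx₀z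
  have hez := hne ε hε.1 hε.2.1 e he
  have hexpand : ⁅x₀ * e * x₀⁻¹, z⁆ =
      x₀ * (⁅e, ⁅x₀⁻¹, z⁆⁆ * (⁅x₀⁻¹, z⁆ * ⁅e, z⁆ * ⁅x₀⁻¹, z⁆⁻¹)) * x₀⁻¹ := by
    simp [commutatorElement_def, mul_assoc]
  rw [hexpand]
  exact hnormal.conj_mem _ (mul_mem hexz (hnormal.conj_mem _ hez _)) _

theorem commutator_normalClosure_le_sup_elemCommutators :
    ⁅Subgroup.normalClosure (rootSpan Y Φ : Set G), Subgroup.normalClosure (rootSpan Z Φ : Set G)⁆ ≤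
      L ⊔ elemCommutators Φ Y Z := by
  have := hX.normal_sup_elemCommutators hY hZ hL
  have := hX.normal_rootConjugates hZ
  have hZle : Subgroup.normalClosure (rootSpan Z Φ : Set G) ≤ rootConjugates Φ X Z :=
    Subgroup.normalClosure_le_normal rootSpan_le_rootConjugates
  refine (Subgroup.commutator_mono le_rfl hZle).trans (commutator_normalClosure_le ?_)
  refine commutator_rootSpan_le_left fun α hα => ?_
  rw [Subgroup.commutator_comm, commutator_le_iff_le_centralizerMod]
  refine fun p hp => (Subgroup.closure_le _).2 ?_
  rintro _ ⟨β, hβ, c, hc, b, hb, rfl⟩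
  exact mem_centralizerMod_iff.2 (commutatorElement_mem_comm.1
    (hX.commutatorElement_conj_mem hY hZ hL hα hβ hp hc hb))

end Commutators

end RelRootGroups

end RelRootGroups

section Coefficients

variable {A : Type*} [Ring A] {n : ℕ}

namespace Idx

theorem neg_eq_iff {i j : Idx n} : i.neg = j ↔ i = j.neg := by
  rw [← neg_injective.eq_iff, Idx.neg_neg]

theorem ne_of_fst_ne {i j : Idx n} (h : i.1 ≠ j.1) : i ≠ j := mt (congrArg Prod.fst) h

theorem ne_neg_of_fst_ne {i j : Idx n} (h : i.1 ≠ j.1) : j ≠ i.neg :=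
  fun e => h (congrArg Prod.fst e).symm

theorem fst_ne {i j : Idx n} (h : i ≠ j) (h' : j ≠ i.neg) : i.1 ≠ j.1 := by
  rcases i with ⟨i, _ | _⟩ <;> rcases j with ⟨j, _ | _⟩ <;> simp_all [neg, eq_comm]

end Idx

namespace FormRingData

variable (D : FormRingData A)

/-- The coefficient `λ^{(ε(j) - ε(i))/2}` in the definition of the short transvection
`T_{ij}`. -/
def twist (i j : Idx n) : A := D.lpow ((Idx.eps j - Idx.eps i) / 2)

/-- The coefficient `λ^{-(ε(i) + 1)/2}` by which the parameters of the long transvections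
`T_{i,-i}` differ from elements of `Λ`. -/
def longScale (i : Idx n) : A := D.lpow (-(Idx.eps i + 1) / 2)

/-- The parameter `-λ^{(ε(j) - ε(i))/2} ā` for which `T_{ij}(a) = T_{-j,-i}(flip a)`. -/
def flip (i j : Idx n) (a : A) : A := -(D.twist i j * D.bar a)

theorem bar_one : D.bar 1 = 1 := by
  simpa only [mul_one, D.bar_bar] using (D.bar_mul (D.bar 1) 1).symm

theorem bar_lam_mul_lam : D.bar D.lam * D.lam = 1 := by
  rw [← D.lam_comm, D.lam_bar]

theorem bar_lam_comm (a : A) : D.bar D.lam * a = a * D.bar D.lam := by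
  simpa only [D.bar_mul, D.bar_bar] using (congrArg D.bar (D.lam_comm (D.bar a))).symm

theorem twist_eq (i j : Idx n) :
    D.twist i j = if i.2 = j.2 then 1 else if i.2 then D.bar D.lam else D.lam := by
  rcases i with ⟨i, _ | _⟩ <;> rcases j with ⟨j, _ | _⟩ <;> simp [twist, lpow, Idx.eps]

theorem longScale_eq (i : Idx n) : D.longScale i = if i.2 then D.bar D.lam else 1 := by
  rcases i with ⟨i, _ | _⟩ <;> simp [longScale, lpow, Idx.eps]

theorem twist_comm (i j : Idx n) (a : A) : a * D.twist i j = D.twist i j * a := by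
  rw [twist_eq]
  split_ifs <;> simp [D.lam_comm, D.bar_lam_comm]

theorem mul_twist_mul (i j : Idx n) (a b : A) :
    a * (D.twist i j * b) = D.twist i j * (a * b) := by
  rw [← mul_assoc, twist_comm, mul_assoc]

theorem mul_longScale_mul (i : Idx n) (a b : A) :
    a * (D.longScale i * b) = D.longScale i * (a * b) := by
  rw [← mul_assoc, ← mul_assoc, longScale_eq]
  split_ifs <;> simp [D.bar_lam_comm]

theorem twist_self (i : Idx n) : D.twist i i = 1 := by simp [twist_eq]

theorem twist_mul_twist (i j l : Idx n) : D.twist i j * D.twist j l = D.twist i l := by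
  rcases i with ⟨i, _ | _⟩ <;> rcases j with ⟨j, _ | _⟩ <;> rcases l with ⟨l, _ | _⟩ <;>
    simp [twist_eq, D.lam_bar, D.bar_lam_mul_lam]

theorem bar_twist (i j : Idx n) : D.bar (D.twist i j) = D.twist j i := by
  rcases i with ⟨i, _ | _⟩ <;> rcases j with ⟨j, _ | _⟩ <;>
    simp [twist_eq, D.bar_one, D.bar_bar]

theorem twist_neg_neg (i j : Idx n) : D.twist j.neg i.neg = D.twist i j := by
  rcases i with ⟨i, _ | _⟩ <;> rcases j with ⟨j, _ | _⟩ <;> simp [twist_eq, Idx.neg]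

theorem longScale_mul_twist_mul (i k : Idx n) (a : A) :
    D.longScale k * (D.twist i k * a) = D.longScale i * a := by
  rcases i with ⟨i, _ | _⟩ <;> rcases k with ⟨j, _ | _⟩ <;>
    simp [twist_eq, longScale_eq, ← mul_assoc, D.bar_lam_mul_lam]

theorem flip_flip (i j : Idx n) (a : A) : D.flip j.neg i.neg (D.flip i j a) = a := by
  rw [flip, flip, twist_neg_neg, map_neg, mul_neg, _root_.neg_neg, D.bar_mul, D.bar_bar,
    bar_twist, twist_comm, ← mul_assoc, twist_mul_twist, twist_self, one_mul]

theorem flip_mul_flip (i j l : Idx n) (a b : A) :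
    D.flip j l b * D.flip i j a = -D.flip i l (a * b) := by
  rw [flip, flip, flip, neg_mul_neg, _root_.neg_neg, D.bar_mul, mul_twist_mul, mul_assoc,
    ← mul_assoc, twist_mul_twist]

theorem flip_longScale_mul (i : Idx n) {g : A} (hg : g ∈ D.Lambda) :
    D.flip i i.neg (D.longScale i * g) = D.longScale i * g := by
  have hsym := D.lambdaMax_mem g hg
  rcases i with ⟨i, _ | _⟩
  · simpa [flip, longScale_eq, twist_eq, Idx.neg] using hsym.symm
  · conv_rhs => rw [hsym]
    simp [flip, longScale_eq, twist_eq, Idx.neg, D.bar_mul, D.bar_bar, D.lam_comm]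

theorem mul_flip_longScale_mul (i j : Idx n) (a : A) {g : A} (hg : g ∈ D.Lambda) :
    a * D.flip i j.neg (D.longScale j * (a * g)) = D.longScale i * (a * g * D.bar a) := by
  have hflip : D.flip i j.neg (a * (D.longScale j * g)) =
      D.longScale j * g * (D.twist i j * D.bar a) := by
    rw [← neg_inj, ← flip_mul_flip D i j, flip_longScale_mul D j hg, flip, mul_neg]
  rw [← mul_longScale_mul, hflip, mul_twist_mul, mul_twist_mul, mul_assoc (D.longScale j),
    mul_longScale_mul, ← mul_twist_mul, longScale_mul_twist_mul, mul_assoc]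

/-- The parameter `a'` with `a + flip a = λ^{-(ε(i) + 1)/2} (a' - λ ā')` at the long position
`(i, -i)`. -/
def longSwap (i : Idx n) (a : A) : A := if i.2 then -D.bar a else a

theorem add_flip_eq (i : Idx n) (a : A) : a + D.flip i i.neg a =
    D.longScale i * (D.longSwap i a - D.lam * D.bar (D.longSwap i a)) := by
  rcases i with ⟨i, _ | _⟩
  · simp [flip, longSwap, longScale_eq, twist_eq, Idx.neg, sub_eq_add_neg]
  · simp [flip, longSwap, longScale_eq, twist_eq, Idx.neg, D.bar_bar, mul_add, ← mul_assoc,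
      D.bar_lam_mul_lam, add_comm]

theorem longSwap_longSwap (i : Idx n) (a : A) : D.longSwap i (D.longSwap i a) = a := by
  unfold longSwap
  split_ifs <;> simp [D.bar_bar]

end FormRingData

end Coefficients

section Transvections

namespace FormRingData

variable {A : Type*} [Ring A] {n : ℕ} (D : FormRingData A) {i j k l : Idx n}

theorem T_val_short (h : i.1 ≠ j.1) (a : A) :
    (D.T i j a).val = 1 + single i j a + single j.neg i.neg (D.flip i j a) := by
  simp [T, Idx.ne_neg_of_fst_ne h, TS, Idx.ne_of_fst_ne h, Xmat, flip, twist, sub_eq_add_neg,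
    add_assoc, stdBasisMatrix_neg']

theorem T_val_long (i : Idx n) (a : A) : (D.T i i.neg a).val = 1 + single i i.neg a := by
  simp [T, TL]

theorem T_add (h : i ≠ j) (a b : A) : D.T i j (a + b) = D.T i j a * D.T i j b := by
  refine Units.ext ?_
  rw [Units.val_mul]
  by_cases hlong : j = i.neg
  · subst hlong
    simp [T_val_long, mul_add, add_mul, Idx.neg_ne, single_add, add_assoc]
  · have hij : i.1 ≠ j.1 := Idx.fst_ne h hlong
    simp [T_val_short D hij, flip, mul_add, add_mul, Idx.neg, Prod.ext_iff, hij, hij.symm,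
      single_add]
    abel

theorem T_flip (h : i.1 ≠ j.1) (a : A) : D.T j.neg i.neg (D.flip i j a) = D.T i j a := by
  refine Units.ext ?_
  rw [T_val_short D h, T_val_short D (i := j.neg) (j := i.neg) h.symm, flip_flip,
    Idx.neg_neg, Idx.neg_neg, add_right_comm]

theorem exists_T_val_eq (h : i ≠ j) (a : A) :
    ∃ a', (D.T i j a).val = 1 + (single i j a + single j.neg i.neg a') := by
  by_cases hlong : j = i.neg
  · subst hlong
    exact ⟨0, by simp [T_val_long]⟩
  · exact ⟨_, (T_val_short D (Idx.fst_ne h hlong) a).trans (add_assoc _ _ _)⟩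

theorem commute_T (hij : i ≠ j) (hkl : k ≠ l) (hjk : j ≠ k) (hjl : j ≠ l.neg) (hki : k ≠ i.neg)
    (hil : i ≠ l) (a b : A) : Commute (D.T i j a) (D.T k l b) := by
  obtain ⟨a', ha⟩ := D.exists_T_val_eq hij a
  obtain ⟨b', hb⟩ := D.exists_T_val_eq hkl b
  have hinj : ∀ {p q : Idx n}, p.neg = q.neg ↔ p = q := Idx.neg_injective.eq_iff
  have hik : i ≠ k.neg := fun h => hki (Idx.neg_eq_iff.2 h).symm
  have hlj : l ≠ j.neg := mt Idx.neg_eq_iff.2 hjl.symm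
  have hxy : (single i j a + single j.neg i.neg a') *
      (single k l b + single l.neg k.neg b') = 0 := by
    simp [mul_add, add_mul, hinj, hjk, hjl, hil,
      hki.symm]
  have hyx : (single k l b + single l.neg k.neg b') *
      (single i j a + single j.neg i.neg a') = 0 := by
    simp [mul_add, add_mul, hinj, hjk.symm, hil.symm,
      hik.symm, hlj]
  refine Units.ext ?_
  rw [Units.val_mul, Units.val_mul, ha, hb, mul_add, mul_one, add_mul, one_mul, hxy, mul_add,
    mul_one, add_mul, one_mul, hyx]
  abel

theorem commutator_T_of_ne (hij : i.1 ≠ j.1) (hjl : j.1 ≠ l.1) (hil : i.1 ≠ l.1) (a b : A) :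
    ⁅D.T i j a, D.T j l b⁆ = D.T i l (a * b) := by
  rw [commutatorElement_def, mul_inv_eq_iff_eq_mul, mul_inv_eq_iff_eq_mul]
  refine Units.ext ?_
  simp only [Units.val_mul, T_val_short D hij, T_val_short D hjl, T_val_short D hil]
  simp [mul_add, add_mul, flip_mul_flip, Idx.neg, Prod.ext_iff, hij, hjl, hil, hij.symm,
    hjl.symm, hil.symm, stdBasisMatrix_neg']
  abel

theorem commutator_T_opposite (h : i.1 ≠ j.1) (a b : A) :
    ⁅D.T i j a, D.T j i.neg b⁆ = D.T i i.neg (a * b + D.flip i i.neg (a * b)) := by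
  rw [commutatorElement_def, mul_inv_eq_iff_eq_mul, mul_inv_eq_iff_eq_mul]
  refine Units.ext ?_
  simp only [Units.val_mul, T_val_short D h, T_val_short D (i := j) (j := i.neg) h.symm, T_val_long]
  simp [mul_add, add_mul, flip_mul_flip, Idx.neg, Prod.ext_iff, h, h.symm, stdBasisMatrix_neg',
    single_add]
  abel

theorem commutator_T_long (h : i.1 ≠ j.1) (a d : A) (hd : D.flip j j.neg d = d) :
    ⁅D.T i j a, D.T j j.neg d⁆ =
      D.T i j.neg (a * d) * D.T i i.neg (a * D.flip i j.neg (a * d)) := by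
  have hflip : d * D.flip i j a = -D.flip i j.neg (a * d) := by
    rw [← flip_mul_flip (j := j), hd]
  rw [commutatorElement_def, mul_inv_eq_iff_eq_mul, mul_inv_eq_iff_eq_mul]
  refine Units.ext ?_
  simp only [Units.val_mul, T_val_short D h, T_val_short D (i := i) (j := j.neg) h, T_val_long]
  simp only [Idx.neg] at hflip ⊢
  simp [mul_add, add_mul, hflip, Prod.ext_iff, h, h.symm, mul_assoc, stdBasisMatrix_neg']
  abel

end FormRingData

end Transvections

section FormIdeals

variable {A : Type*} [Ring A] {D : FormRingData A}

namespace FormRingData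

theorem mul_mem_symI {S T : AddSubgroup A} {a b : A} (ha : a ∈ S) (hb : b ∈ T) :
    a * b ∈ symI S T :=
  AddSubgroup.mem_sup_left (AddSubgroup.subset_closure ⟨a, ha, b, hb, rfl⟩)

theorem symI_comm (S T : AddSubgroup A) : symI S T = symI T S := sup_comm _ _

theorem mul_mem_symI' {S T : AddSubgroup A} {a b : A} (ha : a ∈ T) (hb : b ∈ S) :
    a * b ∈ symI S T :=
  symI_comm T S ▸ mul_mem_symI ha hb

theorem symI_le {S T K : AddSubgroup A} : symI S T ≤ K ↔
    (∀ a ∈ S, ∀ b ∈ T, a * b ∈ K) ∧ ∀ a ∈ T, ∀ b ∈ S, a * b ∈ K := by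
  have hmul : ∀ S T : AddSubgroup A, mulSub S T ≤ K ↔ ∀ a ∈ S, ∀ b ∈ T, a * b ∈ K := by
    refine fun S T =>
      (AddSubgroup.closure_le K).trans ⟨fun h a ha b hb => h ⟨a, ha, b, hb, rfl⟩, ?_⟩
    rintro h _ ⟨a, ha, b, hb, rfl⟩
    exact h a ha b hb
  rw [symI, sup_le_iff, hmul, hmul]

theorem gammaMin_le_iff {K H : AddSubgroup A} : D.gammaMin K ≤ H ↔
    (∀ a ∈ K, a - D.lam * D.bar a ∈ H) ∧ ∀ a ∈ K, ∀ c ∈ D.Lambda, a * c * D.bar a ∈ H := by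
  refine (AddSubgroup.closure_le H).trans ⟨fun h => ⟨fun a ha => h (.inl ⟨a, ha, rfl⟩),
    fun a ha c hc => h (.inr ⟨a, ha, c, hc, rfl⟩)⟩, ?_⟩
  rintro ⟨hmin, hconj⟩ _ (⟨a, ha, rfl⟩ | ⟨a, ha, c, hc, rfl⟩)
  · exact hmin a ha
  · exact hconj a ha c hc

theorem gammaMin_mono {K H : AddSubgroup A} (h : K ≤ H) : D.gammaMin K ≤ D.gammaMin H :=
  AddSubgroup.closure_mono (Set.union_subset_union (fun _ ⟨a, ha, e⟩ => ⟨a, h ha, e⟩)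
    fun _ ⟨a, ha, e⟩ => ⟨a, h ha, e⟩)

theorem symG_comm (I Γ J Δ : AddSubgroup A) : D.symG I Γ J Δ = D.symG J Δ I Γ := by
  rw [symG, symG, symI_comm, sup_right_comm]

theorem symG_le {I Γ J Δ K : AddSubgroup A} : D.symG I Γ J Δ ≤ K ↔
    D.gammaMin (symI I J) ≤ K ∧ (∀ b ∈ J, ∀ g ∈ Γ, b * g * D.bar b ∈ K) ∧
      ∀ b ∈ I, ∀ g ∈ Δ, b * g * D.bar b ∈ K := by
  have hconj : ∀ S Γ : AddSubgroup A,
      D.conjPar S Γ ≤ K ↔ ∀ b ∈ S, ∀ g ∈ Γ, b * g * D.bar b ∈ K := by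
    refine fun S Γ => (AddSubgroup.closure_le K).trans
      ⟨fun h b hb g hg => h ⟨b, hb, g, hg, rfl⟩, ?_⟩
    rintro h _ ⟨b, hb, g, hg, rfl⟩
    exact h b hb g hg
  rw [symG, sup_le_iff, sup_le_iff, hconj, hconj, and_assoc]

/-- The map `x ↦ c x c̄` as an additive endomorphism. -/
def barConj (D : FormRingData A) (c : A) : A →+ A :=
  (AddMonoidHom.mulRight (D.bar c)).comp (AddMonoidHom.mulLeft c)

theorem barConj_apply (c x : A) : D.barConj c x = c * x * D.bar c := rfl

theorem barConj_sub (c a : A) : D.barConj c (a - D.lam * D.bar a) =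
    D.barConj c a - D.lam * D.bar (D.barConj c a) := by
  rw [map_sub, barConj_apply, barConj_apply, D.bar_mul, D.bar_mul, D.bar_bar, ← mul_assoc c D.lam,
    ← D.lam_comm c]
  simp only [mul_assoc]

theorem barConj_mul (c b x : A) : D.barConj c (b * x * D.bar b) = c * b * x * D.bar (c * b) := by
  simp only [barConj_apply, D.bar_mul, mul_assoc]

end FormRingData

namespace FormIdeal

open FormRingData

attribute [ext] FormIdeal

instance : LE (FormIdeal D) := ⟨fun F F' => F.I ≤ F'.I ∧ F.Gamma ≤ F'.Gamma⟩

/-- The form ring `(A, Λ)` as a form ideal of itself. -/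
def top (D : FormRingData A) : FormIdeal D where
  I := ⊤
  Gamma := D.Lambda
  mul_mem_left := fun _ _ _ => trivial
  mul_mem_right := fun _ _ _ => trivial
  bar_mem := fun _ _ => trivial
  gammaMin_le := gammaMin_le_iff.2
    ⟨fun a _ => D.lambdaMin_mem a, fun a _ c hc => D.lambda_conj a c hc⟩
  gamma_le_I := le_top
  gamma_le_Lambda := le_rfl
  gamma_conj := D.lambda_conj

theorem le_top (F : FormIdeal D) : F ≤ top D := ⟨_root_.le_top, F.gamma_le_Lambda⟩

theorem sub_bar_mem (F : FormIdeal D) {a : A} (ha : a ∈ F.I) : a - D.lam * D.bar a ∈ F.Gamma :=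
  (gammaMin_le_iff.1 F.gammaMin_le).1 a ha

theorem conj_Lambda_mem (F : FormIdeal D) {a c : A} (ha : a ∈ F.I) (hc : c ∈ D.Lambda) :
    a * c * D.bar a ∈ F.Gamma :=
  (gammaMin_le_iff.1 F.gammaMin_le).2 a ha c hc

section SymmetrisedProduct

variable (F F' : FormIdeal D)

theorem mul_mem_left_symI (c : A) : ∀ x ∈ symI F.I F'.I, c * x ∈ symI F.I F'.I := by
  refine (symI_le (K := (symI F.I F'.I).comap (AddMonoidHom.mulLeft c))).2 ⟨?_, ?_⟩ <;>
    intro a ha b hb <;>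
    rw [AddSubgroup.mem_comap, AddMonoidHom.coe_mulLeft, ← mul_assoc]
  · exact mul_mem_symI (F.mul_mem_left c a ha) hb
  · exact mul_mem_symI' (F'.mul_mem_left c a ha) hb

theorem mul_mem_right_symI (c : A) : ∀ x ∈ symI F.I F'.I, x * c ∈ symI F.I F'.I := by
  refine (symI_le (K := (symI F.I F'.I).comap (AddMonoidHom.mulRight c))).2 ⟨?_, ?_⟩ <;>
    intro a ha b hb <;>
    rw [AddSubgroup.mem_comap, AddMonoidHom.mulRight_apply, mul_assoc]
  · exact mul_mem_symI ha (F'.mul_mem_right c b hb)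
  · exact mul_mem_symI' ha (F.mul_mem_right c b hb)

theorem bar_mem_symI : ∀ x ∈ symI F.I F'.I, D.bar x ∈ symI F.I F'.I := by
  refine (symI_le (K := (symI F.I F'.I).comap D.bar)).2 ⟨?_, ?_⟩ <;> intro a ha b hb <;>
    rw [AddSubgroup.mem_comap, D.bar_mul]
  · exact mul_mem_symI' (F'.bar_mem b hb) (F.bar_mem a ha)
  · exact mul_mem_symI (F.bar_mem b hb) (F'.bar_mem a ha)

theorem symG_le_symI : D.symG F.I F.Gamma F'.I F'.Gamma ≤ symI F.I F'.I := by
  have hright := mul_mem_right_symI F F'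
  refine symG_le.2 ⟨gammaMin_le_iff.2 ⟨fun a ha => sub_mem ha ?_, fun a ha c _ => ?_⟩,
    fun b hb g hg => ?_, fun b hb g hg => ?_⟩
  · exact mul_mem_left_symI F F' _ _ (bar_mem_symI F F' a ha)
  · exact hright _ _ (hright _ _ ha)
  · exact hright _ _ (mul_mem_symI' hb (F.gamma_le_I hg))
  · exact hright _ _ (mul_mem_symI hb (F'.gamma_le_I hg))

theorem symG_le_Lambda : D.symG F.I F.Gamma F'.I F'.Gamma ≤ D.Lambda :=
  symG_le.2 ⟨gammaMin_le_iff.2 ⟨fun a _ => D.lambdaMin_mem a, fun a _ c hc => D.lambda_conj a c hc⟩,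
    fun b _ g hg => D.lambda_conj b g (F.gamma_le_Lambda hg),
    fun b _ g hg => D.lambda_conj b g (F'.gamma_le_Lambda hg)⟩

theorem conj_mem_symG (c : A) : ∀ x ∈ D.symG F.I F.Gamma F'.I F'.Gamma,
    c * x * D.bar c ∈ D.symG F.I F.Gamma F'.I F'.Gamma := by
  obtain ⟨hmin, hF, hF'⟩ := symG_le.1 (le_refl (D.symG F.I F.Gamma F'.I F'.Gamma))
  obtain ⟨hsub, hconj⟩ := gammaMin_le_iff.1 hmin
  have hleft := mul_mem_left_symI F F'
  refine (symG_le (K := (D.symG F.I F.Gamma F'.I F'.Gamma).comap (D.barConj c))).2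
    ⟨gammaMin_le_iff.2 ⟨fun a ha => ?_, fun a ha d hd => ?_⟩, fun b hb g hg => ?_,
      fun b hb g hg => ?_⟩ <;>
    simp only [AddSubgroup.mem_comap, barConj_sub, barConj_mul]
  · exact hsub _ (mul_mem_right_symI F F' _ _ (hleft _ _ ha))
  · exact hconj _ (hleft _ _ ha) _ hd
  · exact hF _ (F'.mul_mem_left _ _ hb) _ hg
  · exact hF' _ (F.mul_mem_left _ _ hb) _ hg

/-- The symmetrised product `(I, Γ) ∘ (J, Δ)`. -/
def symProd : FormIdeal D where
  I := symI F.I F'.I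
  Gamma := D.symG F.I F.Gamma F'.I F'.Gamma
  mul_mem_left := mul_mem_left_symI F F'
  mul_mem_right := mul_mem_right_symI F F'
  bar_mem := bar_mem_symI F F'
  gammaMin_le := (symG_le.1 le_rfl).1
  gamma_le_I := symG_le_symI F F'
  gamma_le_Lambda := symG_le_Lambda F F'
  gamma_conj := conj_mem_symG F F'

theorem symProd_comm : F.symProd F' = F'.symProd F :=
  FormIdeal.ext (symI_comm _ _) (symG_comm _ _ _ _)

theorem symProd_top_le : (top D).symProd F ≤ F := by
  have hI : ((top D).symProd F).I ≤ F.I :=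
    symI_le.2 ⟨fun a _ b hb => F.mul_mem_left a b hb, fun a ha b _ => F.mul_mem_right b a ha⟩
  exact ⟨hI, symG_le.2 ⟨(gammaMin_mono hI).trans F.gammaMin_le,
    fun b hb g hg => F.conj_Lambda_mem hb hg, fun b _ g hg => F.gamma_conj b g hg⟩⟩

end SymmetrisedProduct

section Positions

variable {n : ℕ} {F F' : FormIdeal D} {i j : Idx n} {a : A}

/-- The additive group of the coefficients of the transvections `T_{ij}` of level `F`: the
condition `a ∈ (I, Γ)` at the position `(i, j)`. -/
def coeff (F : FormIdeal D) (i j : Idx n) : AddSubgroup A :=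
  if j = i.neg then F.Gamma.map (AddMonoidHom.mulLeft (D.longScale i)) else F.I

theorem mem_coeff_long : a ∈ F.coeff i i.neg ↔ ∃ g ∈ F.Gamma, D.longScale i * g = a := by
  simp [coeff, AddSubgroup.mem_map]

theorem mem_coeff_short (h : i.1 ≠ j.1) : a ∈ F.coeff i j ↔ a ∈ F.I := by
  simp [coeff, Idx.ne_neg_of_fst_ne h]

theorem longScale_mul_mem_coeff {g : A} (hg : g ∈ F.Gamma) :
    D.longScale i * g ∈ F.coeff i i.neg :=
  mem_coeff_long.2 ⟨g, hg, rfl⟩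

theorem coeff_mono (h : F ≤ F') (i j : Idx n) : F.coeff i j ≤ F'.coeff i j := by
  unfold coeff
  split_ifs
  · exact AddSubgroup.map_mono h.2
  · exact h.1

theorem coeff_le_top (i j : Idx n) : F.coeff i j ≤ (top D).coeff i j := coeff_mono F.le_top i j

theorem mem_top_coeff_short (h : i.1 ≠ j.1) (a : A) : a ∈ (top D).coeff i j :=
  (mem_coeff_short h).2 trivial

theorem add_flip_mem_coeff (ha : a ∈ F.I) : a + D.flip i i.neg a ∈ F.coeff i i.neg := by
  rw [add_flip_eq]
  refine longScale_mul_mem_coeff (F.sub_bar_mem ?_)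
  unfold longSwap
  split_ifs
  · exact neg_mem (F.bar_mem a ha)
  · exact ha

theorem flip_eq_self (ha : a ∈ F.coeff i i.neg) : D.flip i i.neg a = a := by
  obtain ⟨g, hg, rfl⟩ := mem_coeff_long.1 ha
  exact D.flip_longScale_mul i (F.gamma_le_Lambda hg)

theorem flip_mem_coeff (h : i ≠ j) (ha : a ∈ F.coeff i j) :
    D.flip i j a ∈ F.coeff j.neg i.neg := by
  by_cases hlong : j = i.neg
  · subst hlong
    rwa [flip_eq_self ha, Idx.neg_neg]
  · have hij := Idx.fst_ne h hlong
    rw [mem_coeff_short hij] at ha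
    exact (mem_coeff_short (i := j.neg) (j := i.neg) hij.symm).2
      (neg_mem (F.mul_mem_left _ _ (F.bar_mem a ha)))

end Positions

end FormIdeal

end FormIdeals

section UnitaryRelations

open FormIdeal

variable {A : Type*} [Ring A] {D : FormRingData A} {n : ℕ} {G : Type*} [Group G]

/-- The elementary relations between the unitary transvections, for a family `T` of elements of an
abstract group which these elements generate. The values of `T` matter only at the parameters of
the form ring `(A, Λ)`. -/
structure UnitaryRelations (D : FormRingData A) (T : Idx n → Idx n → A → G) : Prop where
  add : ∀ {i j : Idx n}, i ≠ j → ∀ {a b : A}, a ∈ (top D).coeff i j → b ∈ (top D).coeff i j →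
    T i j (a + b) = T i j a * T i j b
  flip : ∀ {i j : Idx n}, i ≠ j → ∀ {a : A}, a ∈ (top D).coeff i j →
    T j.neg i.neg (D.flip i j a) = T i j a
  commute : ∀ {i j k l : Idx n}, i ≠ j → k ≠ l → j ≠ k → j ≠ l.neg → k ≠ i.neg → i ≠ l →
    ∀ {a b : A}, a ∈ (top D).coeff i j → b ∈ (top D).coeff k l → Commute (T i j a) (T k l b)
  commutator_of_ne : ∀ {i j l : Idx n}, i.1 ≠ j.1 → j.1 ≠ l.1 → i.1 ≠ l.1 → ∀ a b : A,
    ⁅T i j a, T j l b⁆ = T i l (a * b)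
  commutator_opposite : ∀ {i j : Idx n}, i.1 ≠ j.1 → ∀ a b : A,
    ⁅T i j a, T j i.neg b⁆ = T i i.neg (a * b + D.flip i i.neg (a * b))
  commutator_long : ∀ {i j : Idx n}, i.1 ≠ j.1 → ∀ (a : A) {g : A}, g ∈ D.Lambda →
    ⁅T i j a, T j j.neg (D.longScale j * g)⁆ =
      T i j.neg (D.longScale j * (a * g)) * T i i.neg (D.longScale i * (a * g * D.bar a))
  generate : Subgroup.closure {x | ∃ i j, i ≠ j ∧ ∃ a ∈ (top D).coeff i j, T i j a = x} = ⊤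

namespace FormRingData

theorem transvGen_eq (F : FormIdeal D) : D.transvGen n F.I F.Gamma =
    {x | ∃ i j, i ≠ j ∧ ∃ a ∈ F.coeff i j, D.T i j a = x} := by
  ext x
  constructor
  · rintro (⟨i, j, hij, hij', c, hc, rfl⟩ | ⟨i, g, hg, rfl⟩)
    · have h : i.1 ≠ j.1 := Idx.fst_ne hij fun h => hij' (Idx.neg_eq_iff.1 h.symm)
      exact ⟨i, j, hij, c, (mem_coeff_short h).2 hc, if_neg (Idx.ne_neg_of_fst_ne h)⟩
    · exact ⟨i, i.neg, (Idx.neg_ne i).symm, _, longScale_mul_mem_coeff hg, if_pos rfl⟩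
  · rintro ⟨i, j, hij, a, ha, rfl⟩
    by_cases h : j = i.neg
    · subst h
      obtain ⟨g, hg, rfl⟩ := mem_coeff_long.1 ha
      exact .inr ⟨i, g, hg, if_pos rfl⟩
    · exact .inl ⟨i, j, hij, fun e => h (Idx.neg_eq_iff.1 e.symm), a,
        (mem_coeff_short (Idx.fst_ne hij h)).1 ha, if_neg h⟩

open Classical in
/-- `T_{ij}(a)` as an element of `EU(2n, A, Λ)`, with the junk value `1` when `a` is not a
parameter for the position `(i, j)`. -/
noncomputable def transvection (D : FormRingData A) (i j : Idx n) (a : A) : D.EUmax n :=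
  if h : D.T i j a ∈ D.EUmax n then ⟨D.T i j a, h⟩ else 1

variable {i j : Idx n} {a : A}

theorem coe_transvection (h : i ≠ j) (ha : a ∈ (top D).coeff i j) :
    (D.transvection i j a : GLn A n) = D.T i j a := by
  have hmem : D.T i j a ∈ D.EUmax n :=
    Subgroup.subset_closure ((transvGen_eq (top D)).symm.subset ⟨i, j, h, a, ha, rfl⟩)
  rw [transvection, dif_pos hmem]

theorem coe_transvection_short (h : i.1 ≠ j.1) (a : A) :
    (D.transvection i j a : GLn A n) = D.T i j a :=
  coe_transvection (Idx.ne_of_fst_ne h) (mem_top_coeff_short h a)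

theorem coe_transvection_long (ha : a ∈ (top D).coeff i i.neg) :
    (D.transvection i i.neg a : GLn A n) = D.T i i.neg a :=
  coe_transvection (Idx.neg_ne i).symm ha

theorem commutator_transvection_long (h : i.1 ≠ j.1) (a : A) {g : A} (hg : g ∈ D.Lambda) :
    ⁅D.transvection i j a, D.transvection j j.neg (D.longScale j * g)⁆ =
      D.transvection i j.neg (D.longScale j * (a * g)) *
        D.transvection i i.neg (D.longScale i * (a * g * D.bar a)) := by
  have hj : D.longScale j * g ∈ (top D).coeff j j.neg := longScale_mul_mem_coeff hg
  have hi : D.longScale i * (a * g * D.bar a) ∈ (top D).coeff i i.neg :=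
    longScale_mul_mem_coeff (D.lambda_conj a g hg)
  refine Subtype.ext ?_
  change ⁅(D.transvection i j a : GLn A n), (D.transvection j j.neg _ : GLn A n)⁆ = _ * _
  rw [coe_transvection_short h, coe_transvection_long hj, coe_transvection_long hi,
    coe_transvection_short (j := j.neg) h, D.commutator_T_long h a _ (D.flip_longScale_mul j hg),
    mul_longScale_mul, D.mul_flip_longScale_mul i j a hg]

theorem closure_transvection_eq_top :
    Subgroup.closure {x | ∃ i j : Idx n, i ≠ j ∧ ∃ a ∈ (top D).coeff i j,
      D.transvection i j a = x} = ⊤ := by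
  refine top_unique (le_trans (Subgroup.closure_closure_coe_preimage
    (k := D.transvGen n ⊤ D.Lambda)).ge (Subgroup.closure_mono fun x hx => ?_))
  obtain ⟨i, j, hij, a, ha, hx⟩ := (transvGen_eq (top D)).subset hx
  exact ⟨i, j, hij, a, ha, Subtype.ext ((coe_transvection hij ha).trans hx)⟩

theorem unitaryRelations_transvection (D : FormRingData A) (n : ℕ) :
    UnitaryRelations D (D.transvection (n := n)) where
  add {i j} h a b ha hb := Subtype.ext <| by
    rw [Subgroup.coe_mul, coe_transvection h ha, coe_transvection h hb,
      coe_transvection h (add_mem ha hb), D.T_add h]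
  flip {i j} h a ha := by
    by_cases hlong : j = i.neg
    · subst hlong
      rw [flip_eq_self ha, Idx.neg_neg]
    · have hij : i.1 ≠ j.1 := Idx.fst_ne h hlong
      refine Subtype.ext ?_
      rw [coe_transvection_short (i := j.neg) (j := i.neg) hij.symm, coe_transvection_short hij,
        D.T_flip hij]
  commute {i j k l} hij hkl hjk hjl hki hil a b ha hb := Subtype.ext <| by
    rw [Subgroup.coe_mul, Subgroup.coe_mul, coe_transvection hij ha, coe_transvection hkl hb]
    exact D.commute_T hij hkl hjk hjl hki hil a b
  commutator_of_ne {i j l} hij hjl hil a b := Subtype.ext <| by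
    rw [coe_transvection_short hil, ← D.commutator_T_of_ne hij hjl hil,
      ← coe_transvection_short hij, ← coe_transvection_short hjl]
    rfl
  commutator_opposite {i j} h a b := Subtype.ext <| by
    rw [coe_transvection_long (add_flip_mem_coeff trivial), ← D.commutator_T_opposite h,
      ← coe_transvection_short h, ← coe_transvection_short (i := j) (j := i.neg) h.symm]
    rfl
  commutator_long h a _ hg := commutator_transvection_long h a hg
  generate := closure_transvection_eq_top

end FormRingData

end UnitaryRelations

section Roots

variable {n : ℕ} {i j k l : Idx n} {v : Fin n → ℤ}

namespace Idx

/-- The weight `e_{|i|}` or `-e_{|i|}` of the index `i`. -/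
def weight (i : Idx n) : Fin n → ℤ := Pi.single i.1 (eps i)

/-- The root attached to the position `(i, j)`, short when `i ≠ ±j` and long when `j = -i`. -/
def root (i j : Idx n) : Fin n → ℤ := weight i - weight j

/-- The coordinate functional dual to the weight of `i`. -/
def coord (i : Idx n) : (Fin n → ℤ) →ₗ[ℤ] ℤ := eps i • LinearMap.proj i.1

theorem abs_eps (i : Idx n) : |eps i| = 1 := by
  rcases i with ⟨i, _ | _⟩ <;> simp [eps]

theorem weight_neg (i : Idx n) : weight i.neg = -weight i := by
  rcases i with ⟨i, _ | _⟩ <;> simp [weight, eps, neg, Pi.single_neg]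

theorem neg_root (i j : Idx n) : -root i j = root j i := neg_sub _ _

theorem root_neg_neg (i j : Idx n) : root j.neg i.neg = root i j := by
  rw [root, weight_neg, weight_neg, neg_sub_neg, root]

theorem root_add_root (i j l : Idx n) : root i j + root j l = root i l := sub_add_sub_cancel _ _ _

theorem coord_weight_self (i : Idx n) : coord i (weight i) = 1 := by
  rcases i with ⟨i, _ | _⟩ <;> simp [coord, weight, eps]

theorem coord_weight_of_ne (h : i.1 ≠ k.1) : coord i (weight k) = 0 := by
  simp [coord, weight, h]

theorem coord_weight (i k : Idx n) :
    coord i (weight k) = if k = i then 1 else if k = i.neg then -1 else 0 := by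
  split_ifs with h h'
  · rw [h, coord_weight_self]
  · rw [h', weight_neg, map_neg, coord_weight_self]
  · exact coord_weight_of_ne (fst_ne (Ne.symm h) h')

theorem weight_injective : Function.Injective (weight (n := n)) := by
  intro i j h
  have hcoord := congrArg (coord i) h
  rw [coord_weight_self, coord_weight] at hcoord
  split_ifs at hcoord with hji
  exacts [hji.symm, absurd hcoord one_ne_zero]

theorem eq_or_eq_of_root_eq (h : i ≠ j) (hroot : root i j = root k l) :
    (k = i ∧ l = j) ∨ (k = j.neg ∧ l = i.neg) := by
  have hcoord := congrArg (coord i) hroot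
  simp only [root, map_sub, coord_weight_self, coord_weight i k, coord_weight i l,
    coord_weight i j] at hcoord
  have hkl : k = i ∨ l = i.neg := by
    by_contra! hkl
    simp only [h.symm, hkl.1, hkl.2, if_false] at hcoord
    split_ifs at hcoord <;> lia
  rcases hkl with rfl | rfl
  · exact .inl ⟨rfl, weight_injective (sub_right_injective hroot).symm⟩
  · refine .inr ⟨weight_injective ?_, rfl⟩
    rw [root, root, weight_neg, sub_neg_eq_add] at hroot
    rw [weight_neg]
    linear_combination -hroot

theorem exists_fst_ne_fst_ne (hn : 3 ≤ n) (i j : Idx n) : ∃ k : Idx n, i.1 ≠ k.1 ∧ j.1 ≠ k.1 := by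
  obtain ⟨s, hs⟩ : ∃ s, s ∉ ({i.1, j.1} : Finset (Fin n)) :=
    Finset.exists_mem_notMem_of_card_lt_card
        (s := {i.1, j.1}) (t := .univ) (by grind [Finset.card_le_two, Finset.card_fin])
      |>.imp fun _ h => h.2
  simp only [Finset.mem_insert, Finset.mem_singleton, not_or] at hs
  exact ⟨(s, true), Ne.symm hs.1, Ne.symm hs.2⟩

end Idx

open Idx

/-- The root system of type `C_n`. -/
def rootSystem (n : ℕ) : Set (Fin n → ℤ) := {v | ∃ i j : Idx n, i ≠ j ∧ root i j = v}

theorem root_mem_rootSystem (h : i ≠ j) : root i j ∈ rootSystem n := ⟨i, j, h, rfl⟩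

theorem neg_mem_rootSystem (hv : v ∈ rootSystem n) : -v ∈ rootSystem n := by
  obtain ⟨i, j, h, rfl⟩ := hv
  rw [neg_root]
  exact root_mem_rootSystem h.symm

theorem sum_abs_weight (i : Idx n) : ∑ s, |weight i s| = 1 := by
  rw [Finset.sum_eq_single i.1 (fun s _ hs => by simp [weight, hs]) (by simp)]
  simp [weight, abs_eps]

theorem sum_abs_of_mem_rootSystem (hv : v ∈ rootSystem n) : ∑ s, |v s| = 2 := by
  obtain ⟨i, j, h, rfl⟩ := hv
  suffices hs : ∀ s, |root i j s| = |weight i s| + |weight j s| by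
    simp only [hs, Finset.sum_add_distrib, sum_abs_weight]
    rfl
  intro s
  by_cases hlong : j = i.neg
  · simp [hlong, root, weight_neg, ← two_mul, abs_mul]
  · by_cases hs : s = i.1
    · simp [hs, root, weight, fst_ne h hlong]
    · simp [root, weight, hs]

theorem smul_add_smul_ne_zero_of_mem_offLine {β γ : Fin n → ℤ} (hβ : β ∈ rootSystem n)
    (hγ : γ ∈ offLine (rootSystem n) β) {p q : ℤ} (hp : 0 < p) : p • γ + q • β ≠ 0 := by
  intro h
  have hpq : p = |q| := by
    have hsum : ∑ s, |(p • γ) s| = ∑ s, |(-(q • β)) s| := by rw [eq_neg_of_add_eq_zero_left h]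
    simp only [Pi.smul_apply, Pi.neg_apply, smul_eq_mul, abs_neg, abs_mul, ← Finset.mul_sum,
      sum_abs_of_mem_rootSystem hβ, sum_abs_of_mem_rootSystem hγ.1, abs_of_pos hp] at hsum
    lia
  rcases abs_choice q with hq | hq
  · obtain rfl : p = q := hpq.trans hq
    rw [← smul_add, smul_eq_zero_iff_right hp.ne', ← eq_neg_iff_add_eq_zero] at h
    exact hγ.2.2 h
  · obtain rfl : q = -p := by lia
    rw [neg_smul, ← sub_eq_add_neg, ← smul_sub, smul_eq_zero_iff_right hp.ne', sub_eq_zero] at h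
    exact hγ.2.1 h

theorem sum_abs_coord_le (hv : v ∈ rootSystem n) {s : Finset (Idx n)}
    (hs : Set.InjOn Prod.fst (s : Set (Idx n))) : ∑ i ∈ s, |coord i v| ≤ 2 := by
  have hcoord : ∀ i : Idx n, |coord i v| = |v i.1| := fun i => by simp [coord, abs_mul, abs_eps]
  calc ∑ i ∈ s, |coord i v| = ∑ t ∈ s.image Prod.fst, |v t| := by
        rw [Finset.sum_image hs, Finset.sum_congr rfl fun i _ => hcoord i]
    _ ≤ ∑ t, |v t| :=
        Finset.sum_le_sum_of_subset_of_nonneg (Finset.subset_univ _) fun _ _ _ => abs_nonneg _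
    _ = 2 := sum_abs_of_mem_rootSystem hv

theorem abs_coord_add_abs_coord_le (hv : v ∈ rootSystem n) (h : i.1 ≠ j.1) :
    |coord i v| + |coord j v| ≤ 2 := by
  simpa [Finset.sum_pair (ne_of_fst_ne h)] using
    sum_abs_coord_le hv (s := {i, j}) (by simp [Set.InjOn, h, h.symm])

theorem abs_coord_add_abs_coord_add_abs_coord_le (hv : v ∈ rootSystem n) (hij : i.1 ≠ j.1)
    (hik : i.1 ≠ k.1) (hjk : j.1 ≠ k.1) : |coord i v| + |coord j v| + |coord k v| ≤ 2 := by
  have hsum := sum_abs_coord_le hv (s := {i, j, k})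
    (by simp [Set.InjOn, hij, hij.symm, hik, hik.symm, hjk, hjk.symm])
  rwa [Finset.sum_insert (by simp [ne_of_fst_ne hij, ne_of_fst_ne hik]),
    Finset.sum_pair (ne_of_fst_ne hjk), ← add_assoc] at hsum

theorem openHalf_short_subset (hij : i.1 ≠ j.1) (hik : i.1 ≠ k.1) (hjk : j.1 ≠ k.1) :
    openHalf (rootSystem n) (root k j) (root i j) ⊆ {root k j, root k i} := by
  rintro v ⟨hv, p, q, hp, rfl⟩
  have hle := abs_coord_add_abs_coord_add_abs_coord_le hv hij hik hjk
  simp only [root, map_add, map_smul, map_sub, smul_eq_mul, coord_weight_self,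
    coord_weight_of_ne hij, coord_weight_of_ne hik, coord_weight_of_ne hjk,
    coord_weight_of_ne hij.symm, coord_weight_of_ne hik.symm, coord_weight_of_ne hjk.symm] at hle
  obtain ⟨rfl, rfl | rfl⟩ : p = 1 ∧ (q = 0 ∨ q = -1) := by grind
  · exact .inl (by module)
  · exact .inr (by simp only [root]; module)

theorem openHalf_long_subset (h : i.1 ≠ k.1) :
    openHalf (rootSystem n) (root i k) (root i i.neg) ⊆
      {root i k, root i.neg k, root k.neg k} := by
  rintro v ⟨hv, p, q, hp, rfl⟩
  have hle := abs_coord_add_abs_coord_le hv h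
  simp only [root, map_add, map_smul, map_sub, map_neg, smul_eq_mul, weight_neg, coord_weight_self,
    coord_weight_of_ne h, coord_weight_of_ne h.symm] at hle
  obtain ⟨rfl, rfl⟩ | ⟨rfl, rfl⟩ | ⟨rfl, rfl⟩ :
    (p = 1 ∧ q = 0) ∨ (p = 1 ∧ q = -1) ∨ (p = 2 ∧ q = -1) := by grind
  · exact .inl (by module)
  · exact .inr (.inl (by simp only [root, weight_neg]; module))
  · exact .inr (.inr (by simp only [Set.mem_singleton_iff, root, weight_neg]; module))

theorem openHalf_long_long_subset (h : i.1 ≠ k.1) :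
    openHalf (rootSystem n) (root k k.neg) (root i i.neg) ⊆ {root k k.neg} := by
  rintro v ⟨hv, p, q, hp, rfl⟩
  have hle := abs_coord_add_abs_coord_le hv h
  simp only [root, map_add, map_smul, map_sub, map_neg, smul_eq_mul, weight_neg, coord_weight_self,
    coord_weight_of_ne h, coord_weight_of_ne h.symm] at hle
  obtain ⟨rfl, rfl⟩ : p = 1 ∧ q = 0 := by grind
  simp

theorem posComb_neg_short_subset (h : i.1 ≠ k.1) :
    posComb (rootSystem n) (root i.neg k) (root i k) ⊆ {root k.neg k} := by
  rintro v ⟨hv, p, q, hp, hq, rfl⟩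
  have hle := abs_coord_add_abs_coord_le hv h
  simp only [root, map_add, map_smul, map_sub, map_neg, smul_eq_mul, weight_neg, coord_weight_self,
    coord_weight_of_ne h, coord_weight_of_ne h.symm] at hle
  obtain ⟨rfl, rfl⟩ : p = 1 ∧ q = 1 := by grind
  simp only [Set.mem_singleton_iff, root, weight_neg]
  module

theorem root_mem_posComb (h : i ≠ l) : root i l ∈ posComb (rootSystem n) (root i j) (root j l) :=
  ⟨root_mem_rootSystem h, 1, 1, one_pos, one_pos, by rw [one_smul, one_smul, root_add_root]⟩

theorem root_neg_mem_posComb :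
    root i i.neg ∈ posComb (rootSystem n) (root i j) (root j j.neg) :=
  ⟨root_mem_rootSystem (neg_ne i).symm, 2, 1, two_pos, one_pos, by
    simp only [root, weight_neg]
    module⟩

theorem root_mem_offLine_of_left (h : i ≠ j) (hik : i.1 ≠ k.1) (hil : i.1 ≠ l.1) :
    root i j ∈ offLine (rootSystem n) (root k l) := by
  have hne : ∀ {k l : Idx n}, i.1 ≠ k.1 → i.1 ≠ l.1 → root i j ≠ root k l := by
    intro k l hik hil hroot
    rcases eq_or_eq_of_root_eq h hroot with ⟨rfl, -⟩ | ⟨-, rfl⟩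
    exacts [hik rfl, hil rfl]
  exact ⟨root_mem_rootSystem h, hne hik hil, neg_root k l ▸ hne hil hik⟩

theorem root_mem_offLine_of_right (h : i ≠ j) (hjk : j.1 ≠ k.1) (hjl : j.1 ≠ l.1) :
    root i j ∈ offLine (rootSystem n) (root k l) := by
  rw [← root_neg_neg i j]
  exact root_mem_offLine_of_left (fun e => h (neg_injective e).symm) hjk hjl

end Roots

section RootSubgroups

open Idx FormIdeal FormRingData

variable {A : Type*} [Ring A] {D : FormRingData A} {n : ℕ} {G : Type*} [Group G]
  {T : Idx n → Idx n → A → G} {F F' : FormIdeal D} {i j k l : Idx n} {v : Fin n → ℤ}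

/-- The root subgroup of level `F` at the root `v`. Both positions `(i, j)` and `(-j, -i)` of `v`
are used, although they give the same elements. -/
def rootSubgroup (T : Idx n → Idx n → A → G) (F : FormIdeal D) (v : Fin n → ℤ) : Subgroup G :=
  Subgroup.closure {g | ∃ i j, i ≠ j ∧ root i j = v ∧ ∃ a ∈ F.coeff i j, T i j a = g}

theorem mem_rootSubgroup_of_mem_coeff (h : i ≠ j) {a : A} (ha : a ∈ F.coeff i j) :
    T i j a ∈ rootSubgroup T F (root i j) :=
  Subgroup.subset_closure ⟨i, j, h, rfl, a, ha, rfl⟩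

theorem rootSubgroup_mono (h : F ≤ F') (v : Fin n → ℤ) :
    rootSubgroup T F v ≤ rootSubgroup T F' v :=
  Subgroup.closure_mono fun _ ⟨i, j, hij, hv, a, ha, hg⟩ =>
    ⟨i, j, hij, hv, a, coeff_mono h i j ha, hg⟩

namespace UnitaryRelations

variable (U : UnitaryRelations D T)
include U

theorem zero (h : i ≠ j) : T i j 0 = 1 := by
  simpa using U.add h (zero_mem _) (zero_mem _)

theorem neg (h : i ≠ j) {a : A} (ha : a ∈ (top D).coeff i j) : T i j (-a) = (T i j a)⁻¹ := by
  rw [eq_inv_iff_mul_eq_one, ← U.add h (neg_mem ha) ha, neg_add_cancel, U.zero h]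

theorem mem_rootSubgroup (h : i ≠ j) {g : G} :
    g ∈ rootSubgroup T F (root i j) ↔ ∃ a ∈ F.coeff i j, T i j a = g := by
  refine ⟨fun hg => ?_, fun ⟨a, ha, hg⟩ => hg ▸ mem_rootSubgroup_of_mem_coeff h ha⟩
  induction hg using Subgroup.closure_induction with
  | mem x hx =>
    obtain ⟨k, l, hkl, hroot, a, ha, rfl⟩ := hx
    rcases eq_or_eq_of_root_eq hkl hroot with ⟨rfl, rfl⟩ | ⟨rfl, rfl⟩
    · exact ⟨a, ha, rfl⟩
    · exact ⟨_, flip_mem_coeff hkl ha, U.flip hkl (coeff_le_top _ _ ha)⟩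
  | one => exact ⟨0, zero_mem _, U.zero h⟩
  | mul x y _ _ hx hy =>
    obtain ⟨a, ha, rfl⟩ := hx
    obtain ⟨b, hb, rfl⟩ := hy
    exact ⟨a + b, add_mem ha hb, U.add h (coeff_le_top _ _ ha) (coeff_le_top _ _ hb)⟩
  | inv x _ hx =>
    obtain ⟨a, ha, rfl⟩ := hx
    exact ⟨-a, neg_mem ha, U.neg h (coeff_le_top _ _ ha)⟩

theorem rootSpan_rootSubgroup_top : rootSpan (rootSubgroup T (top D)) (rootSystem n) = ⊤ := by
  refine top_unique (U.generate ▸ (Subgroup.closure_le _).2 ?_)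
  rintro _ ⟨i, j, h, a, ha, rfl⟩
  exact le_rootSpan (root_mem_rootSystem h) (mem_rootSubgroup_of_mem_coeff h ha)

theorem commute_of_mem_rootSubgroup (hv : v ∈ rootSystem n) {x y : G}
    (hx : x ∈ rootSubgroup T (top D) v) (hy : y ∈ rootSubgroup T (top D) v) : Commute x y := by
  obtain ⟨i, j, h, rfl⟩ := hv
  obtain ⟨a, ha, rfl⟩ := (U.mem_rootSubgroup h).1 hx
  obtain ⟨b, hb, rfl⟩ := (U.mem_rootSubgroup h).1 hy
  rw [commute_iff_eq, ← U.add h ha hb, ← U.add h hb ha, add_comm]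

theorem commutator_rootSubgroup_eq_bot (hij : i ≠ j) (hkl : k ≠ l) (hjk : j ≠ k) (hjl : j ≠ l.neg)
    (hki : k ≠ i.neg) (hil : i ≠ l) :
    ⁅rootSubgroup T F (root i j), rootSubgroup T F' (root k l)⁆ = ⊥ := by
  refine Subgroup.commutator_eq_bot_iff_le_centralizer.2 fun x hx y hy => ?_
  obtain ⟨a, ha, rfl⟩ := (U.mem_rootSubgroup hij).1 hx
  obtain ⟨b, hb, rfl⟩ := (U.mem_rootSubgroup hkl).1 hy
  exact (U.commute hij hkl hjk hjl hki hil (coeff_le_top _ _ ha) (coeff_le_top _ _ hb)).symm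

theorem commutator_rootSubgroup_long_le (h : i.1 ≠ j.1) :
    ⁅rootSubgroup T F (root i j), rootSubgroup T F' (root j j.neg)⁆ ≤
      rootSpan (rootSubgroup T (F.symProd F'))
        (posComb (rootSystem n) (root i j) (root j j.neg)) := by
  refine Subgroup.commutator_le.2 fun x hx y hy => ?_
  have hij : i ≠ j.neg := ne_neg_of_fst_ne h.symm
  obtain ⟨a, ha, rfl⟩ := (U.mem_rootSubgroup (ne_of_fst_ne h)).1 hx
  obtain ⟨b, hb, rfl⟩ := (U.mem_rootSubgroup (neg_ne j).symm).1 hy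
  obtain ⟨g, hg, rfl⟩ := mem_coeff_long.1 hb
  have ha' := (mem_coeff_short h).1 ha
  rw [U.commutator_long h a (F'.gamma_le_Lambda hg)]
  refine mul_mem (le_rootSpan (root_mem_posComb hij) (mem_rootSubgroup_of_mem_coeff hij ?_))
    (le_rootSpan root_neg_mem_posComb
      (mem_rootSubgroup_of_mem_coeff (neg_ne i).symm (longScale_mul_mem_coeff ?_)))
  · exact (mem_coeff_short (j := j.neg) h).2
      ((F.symProd F').mul_mem_left _ _ (mul_mem_symI ha' (F'.gamma_le_I hg)))
  · exact (symG_le.1 le_rfl).2.2 a ha' g hg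

theorem commutator_rootSubgroup_chain_le (hij : i ≠ j) (hjl : j ≠ l) (hil : i ≠ l) :
    ⁅rootSubgroup T F (root i j), rootSubgroup T F' (root j l)⁆ ≤
      rootSpan (rootSubgroup T (F.symProd F'))
        (posComb (rootSystem n) (root i j) (root j l)) := by
  by_cases hlj : l = j.neg
  · subst hlj
    exact U.commutator_rootSubgroup_long_le (fst_ne hij fun h => hil (neg_eq_iff.1 h.symm))
  by_cases hji : j = i.neg
  · subst hji
    have hli : l.1 ≠ i.1 := Ne.symm (fst_ne hil fun h => hjl h.symm)
    have hle := U.commutator_rootSubgroup_long_le (F := F') (F' := F) (i := l.neg) (j := i) hli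
    rw [← root_neg_neg l.neg i, Idx.neg_neg] at hle
    rwa [Subgroup.commutator_comm, posComb_comm, symProd_comm]
  have hij' := fst_ne hij hji
  have hjl' := fst_ne hjl hlj
  refine Subgroup.commutator_le.2 fun x hx y hy => ?_
  obtain ⟨a, ha, rfl⟩ := (U.mem_rootSubgroup hij).1 hx
  obtain ⟨b, hb, rfl⟩ := (U.mem_rootSubgroup hjl).1 hy
  have hab : a * b ∈ (F.symProd F').I :=
    mul_mem_symI ((mem_coeff_short hij').1 ha) ((mem_coeff_short hjl').1 hb)
  suffices h : ∃ c ∈ (F.symProd F').coeff i l, ⁅T i j a, T j l b⁆ = T i l c by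
    obtain ⟨c, hc, heq⟩ := h
    exact heq ▸ le_rootSpan (root_mem_posComb hil) (mem_rootSubgroup_of_mem_coeff hil hc)
  by_cases hli : l = i.neg
  · subst hli
    exact ⟨_, add_flip_mem_coeff hab, U.commutator_opposite hij' a b⟩
  · have hil' := fst_ne hil hli
    exact ⟨_, (mem_coeff_short hil').2 hab, U.commutator_of_ne hij' hjl' hil' a b⟩

theorem commutator_rootSubgroup_le {α β : Fin n → ℤ} (hα : α ∈ rootSystem n)
    (hβ : β ∈ rootSystem n) (hαβ : α + β ≠ 0) :
    ⁅rootSubgroup T F α, rootSubgroup T F' β⁆ ≤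
      rootSpan (rootSubgroup T (F.symProd F')) (posComb (rootSystem n) α β) := by
  have hchain : ∀ {i j k l : Idx n}, i ≠ j → k ≠ l → root i j + root k l ≠ 0 → j = k →
      ⁅rootSubgroup T F (root i j), rootSubgroup T F' (root k l)⁆ ≤
        rootSpan (rootSubgroup T (F.symProd F'))
          (posComb (rootSystem n) (root i j) (root k l)) := by
    rintro i j _ l hij hjl hne rfl
    refine U.commutator_rootSubgroup_chain_le hij hjl ?_
    rintro rfl
    exact hne (by rw [root_add_root, root, sub_self])
  obtain ⟨i, j, hij, rfl⟩ := hα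
  obtain ⟨k, l, hkl, rfl⟩ := hβ
  have hij' : j.neg ≠ i.neg := neg_injective.ne hij.symm
  have hkl' : l.neg ≠ k.neg := neg_injective.ne hkl.symm
  by_cases hjk : j = k
  · exact hchain hij hkl hαβ hjk
  by_cases hjl : j = l.neg
  · rw [← root_neg_neg k l] at hαβ ⊢
    exact hchain hij hkl' hαβ hjl
  by_cases hki : k = i.neg
  · rw [← root_neg_neg i j] at hαβ ⊢
    exact hchain hij' hkl hαβ hki.symm
  by_cases hil : i = l
  · rw [← root_neg_neg i j, ← root_neg_neg k l] at hαβ ⊢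
    exact hchain hij' hkl' hαβ (congrArg Idx.neg hil)
  · rw [U.commutator_rootSubgroup_eq_bot hij hkl hjk hjl hki hil]
    exact bot_le

theorem chevalleyRel_rootSubgroup (F : FormIdeal D) :
    ChevalleyRel (rootSystem n) (rootSubgroup T (top D)) (rootSubgroup T F) :=
  fun _ hα _ hβ hαβ => (U.commutator_rootSubgroup_le hα hβ hαβ).trans
    (iSup₂_mono fun v _ => rootSubgroup_mono F.symProd_top_le v)

end UnitaryRelations

end RootSubgroups

section Splittings

open Idx FormIdeal

variable {A : Type*} [Ring A] {D : FormRingData A} {n : ℕ} {G : Type*} [Group G]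
  {T : Idx n → Idx n → A → G} {i j k : Idx n}

namespace UnitaryRelations

variable (U : UnitaryRelations D T)
include U

theorem eq_commutator_of_mem_short (F : FormIdeal D) (hij : i.1 ≠ j.1) (hik : i.1 ≠ k.1)
    (hjk : j.1 ≠ k.1) {y : G} (hy : y ∈ rootSubgroup T F (root i j)) :
    ∃ e ∈ rootSubgroup T F (root i k), y = ⁅T k j 1, e⁆ := by
  obtain ⟨b, hb, rfl⟩ := (U.mem_rootSubgroup (ne_of_fst_ne hij)).1 hy
  rw [mem_coeff_short hij] at hb
  refine ⟨T i k (-b), mem_rootSubgroup_of_mem_coeff (ne_of_fst_ne hik)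
    ((mem_coeff_short hik).2 (neg_mem hb)), ?_⟩
  rw [← commutatorElement_inv, U.commutator_of_ne hik hjk.symm hij, mul_one,
    ← U.neg (ne_of_fst_ne hij) (mem_top_coeff_short hij _), _root_.neg_neg]

theorem mul_eq_commutator_of_mem_long (F : FormIdeal D) (h : i.1 ≠ k.1) {y : G}
    (hy : y ∈ rootSubgroup T F (root i i.neg)) :
    ∃ e ∈ rootSubgroup T F (root k k.neg), ∃ s ∈ rootSubgroup T F (root i k.neg),
      y * s = ⁅T i k 1, e⁆ := by
  have hik : i ≠ k.neg := ne_of_fst_ne (j := k.neg) h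
  obtain ⟨b, hb, rfl⟩ := (U.mem_rootSubgroup (neg_ne i).symm).1 hy
  obtain ⟨g, hg, rfl⟩ := mem_coeff_long.1 hb
  have hs : D.longScale k * g ∈ F.coeff i k.neg :=
    (mem_coeff_short (j := k.neg) h).2 (F.mul_mem_left _ _ (F.gamma_le_I hg))
  refine ⟨_, mem_rootSubgroup_of_mem_coeff (neg_ne k).symm (longScale_mul_mem_coeff hg),
    _, mem_rootSubgroup_of_mem_coeff hik hs, ?_⟩
  have hcomm : Commute (T i k.neg (D.longScale k * g)) (T i i.neg (D.longScale i * g)) :=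
    U.commute hik (neg_ne i).symm hik.symm (by rw [Idx.neg_neg]; exact hik.symm) (neg_ne i).symm
      (neg_ne i).symm (coeff_le_top _ _ hs) (coeff_le_top _ _ hb)
  rw [U.commutator_long h 1 (F.gamma_le_Lambda hg), one_mul, D.bar_one, mul_one, hcomm.eq]

theorem exists_mul_of_mem_openHalf_short (hij : i.1 ≠ j.1) (hik : i.1 ≠ k.1) (hjk : j.1 ≠ k.1)
    {w : G}
    (hw : w ∈ rootSpan (rootSubgroup T (top D)) (openHalf (rootSystem n) (root k j) (root i j))) :
    ∃ x ∈ rootSubgroup T (top D) (root k j), ∃ y ∈ rootSubgroup T (top D) (root k i),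
      Commute x y ∧ x * y = w := by
  have hbot : ⁅rootSubgroup T (top D) (root k j), rootSubgroup T (top D) (root k i)⁆ = ⊥ :=
    U.commutator_rootSubgroup_eq_bot (ne_of_fst_ne hjk.symm) (ne_of_fst_ne hik.symm)
      (ne_of_fst_ne hjk) (ne_neg_of_fst_ne hij) (neg_ne k).symm (ne_of_fst_ne hik.symm)
  have hsup := rootSpan_mono (openHalf_short_subset hij hik hjk) hw
  rw [rootSpan, iSup_pair] at hsup
  obtain ⟨x, hx, y, hy, hxy⟩ := exists_mul_of_mem_sup (hbot.le.trans bot_le) hsup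
  exact ⟨x, hx, y, hy, (Subgroup.commutator_eq_bot_iff_le_centralizer.1 hbot hx y hy).symm, hxy⟩

theorem exists_mul_mul_of_mem_openHalf_long (h : i.1 ≠ k.1) {w : G}
    (hw : w ∈ rootSpan (rootSubgroup T (top D))
      (openHalf (rootSystem n) (root i k) (root i i.neg))) :
    ∃ x ∈ rootSubgroup T (top D) (root i k), ∃ y ∈ rootSubgroup T (top D) (root i.neg k),
      ∃ z ∈ rootSubgroup T (top D) (root k.neg k), x * (y * z) = w := by
  have hbot : ∀ {i : Idx n}, i.1 ≠ k.1 →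
      ⁅rootSubgroup T (top D) (root i k), rootSubgroup T (top D) (root k.neg k)⁆ = ⊥ :=
    fun {i} hik => U.commutator_rootSubgroup_eq_bot (ne_of_fst_ne hik) (neg_ne k)
      (neg_ne k).symm (neg_ne k).symm (neg_injective.ne (ne_of_fst_ne hik.symm)) (ne_of_fst_ne hik)
  have hcomm : ⁅rootSubgroup T (top D) (root i k), rootSubgroup T (top D) (root i.neg k)⁆ ≤
      rootSubgroup T (top D) (root k.neg k) := by
    rw [Subgroup.commutator_comm]
    refine (U.chevalleyRel_rootSubgroup _ _ (root_mem_rootSystem (ne_of_fst_ne (i := i.neg) h)) _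
      (root_mem_rootSystem (ne_of_fst_ne h)) fun hzero => ?_).trans
      ((rootSpan_mono (posComb_neg_short_subset h)).trans (rootSpan_le.2 fun _ hv => hv ▸ le_rfl))
    have hcoord := congrArg (coord k) hzero
    simp [root, weight_neg, coord_weight_self, coord_weight_of_ne h.symm] at hcoord
  have hsup := rootSpan_mono (openHalf_long_subset h) hw
  rw [rootSpan, iSup_insert, iSup_pair] at hsup
  exact exists_mul_mul_of_mem_sup hcomm ((hbot h).le.trans bot_le)
    ((hbot (i := i.neg) h).le.trans bot_le) hsup

theorem hasSplitting_short (F : FormIdeal D) (hij : i.1 ≠ j.1) (hik : i.1 ≠ k.1)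
    (hjk : j.1 ≠ k.1) :
    HasSplitting (rootSystem n) (rootSubgroup T (top D)) (rootSubgroup T F) (root i j) := by
  have hki := ne_of_fst_ne hik.symm
  have hkj := ne_of_fst_ne hjk.symm
  have hoff : root i k ∈ offLine (rootSystem n) (root i j) :=
    root_mem_offLine_of_right hki.symm hik.symm hjk.symm
  refine ⟨root k j, root_mem_offLine_of_left hkj hik.symm hjk.symm, root i k, hoff, T k j 1,
    mem_rootSubgroup_of_mem_coeff hkj (mem_top_coeff_short hjk.symm _), fun y hy => ?_,
    fun σ hσ w hw => ?_⟩
  · obtain ⟨e, he, hye⟩ := U.eq_commutator_of_mem_short F hij hik hjk hy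
    exact ⟨e, he, e⁻¹, inv_mem (le_rootSpan hoff he), hye⟩
  obtain ⟨x, hx, y, hy, hxy, rfl⟩ := U.exists_mul_of_mem_openHalf_short hij hik hjk hw
  rw [← root_neg_neg i k, ← root_neg_neg i j] at hσ
  rcases openHalf_short_subset (i := j.neg) (j := i.neg) (k := k.neg) hij.symm hjk hik hσ with
    rfl | rfl <;> rw [root_neg_neg, neg_root]
  · have hoff' := root_mem_offLine_of_right (k := i) (l := k) hkj hij.symm hjk
    exact ⟨root k j, hoff', root k j, hoff', x, hx, 1, one_mem _, y, hy, by rw [mul_one]⟩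
  · have hoff' := root_mem_offLine_of_right (k := j) (l := k) hki hij hik
    exact ⟨root k i, hoff', root k i, hoff', y, hy, 1, one_mem _, x, hx, by rw [mul_one, hxy.eq]⟩

theorem hasSplitting_long (F : FormIdeal D) (h : i.1 ≠ k.1) :
    HasSplitting (rootSystem n) (rootSubgroup T (top D)) (rootSubgroup T F) (root i i.neg) := by
  have hik := ne_of_fst_ne h
  have hoff : root k k.neg ∈ offLine (rootSystem n) (root i i.neg) :=
    root_mem_offLine_of_left (neg_ne k).symm h.symm h.symm
  have hoff' : root i k.neg ∈ offLine (rootSystem n) (root i i.neg) :=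
    root_mem_offLine_of_right (ne_of_fst_ne (j := k.neg) h) h.symm h.symm
  refine ⟨root i k, root_mem_offLine_of_right hik h.symm h.symm, root k k.neg, hoff, T i k 1,
    mem_rootSubgroup_of_mem_coeff hik (mem_top_coeff_short h _), fun y hy => ?_,
    fun σ hσ w hw => ?_⟩
  · obtain ⟨e, he, s, hs, hys⟩ := U.mul_eq_commutator_of_mem_long F h hy
    refine ⟨e, he, e⁻¹ * s⁻¹,
      mul_mem (inv_mem (le_rootSpan hoff he)) (inv_mem (le_rootSpan hoff' hs)), ?_⟩
    rw [← mul_assoc, ← commutatorElement_def, ← hys, mul_inv_cancel_right]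
  obtain ⟨x, hx, y, hy, z, hz, rfl⟩ := U.exists_mul_mul_of_mem_openHalf_long h hw
  obtain rfl : σ = root k k.neg := openHalf_long_long_subset h hσ
  exact ⟨root i k, root_mem_offLine_of_left hik h h, root i.neg k,
    root_mem_offLine_of_left (ne_of_fst_ne (i := i.neg) h) h h, x, hx, y, hy, z,
    by rwa [neg_root], (mul_assoc _ _ _).symm⟩

theorem relRootGroups_rootSubgroup (hn : 3 ≤ n) (F : FormIdeal D) :
    RelRootGroups (rootSystem n) (rootSubgroup T (top D)) (rootSubgroup T F) where
  neg_mem _ hv := neg_mem_rootSystem hv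
  indep _ hβ _ hγ _ _ hp := smul_add_smul_ne_zero_of_mem_offLine hβ hγ hp
  le := rootSubgroup_mono F.le_top
  chevalley_ambient := U.chevalleyRel_rootSubgroup _
  chevalley := U.chevalleyRel_rootSubgroup F
  commute _ hv _ hx _ hy := U.commute_of_mem_rootSubgroup hv hx hy
  generate := U.rootSpan_rootSubgroup_top
  hasSplitting := by
    rintro _ ⟨i, j, h, rfl⟩
    obtain ⟨k, hik, hjk⟩ := exists_fst_ne_fst_ne hn i j
    by_cases hlong : j = i.neg
    · subst hlong
      exact U.hasSplitting_long F hik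
    · exact U.hasSplitting_short F (fst_ne h hlong) hik hjk

end UnitaryRelations

end Splittings

section RelativeElementary

open Idx FormIdeal FormRingData

variable {A : Type*} [Ring A] {D : FormRingData A} {n : ℕ} {G : Type*} [Group G]
  {T : Idx n → Idx n → A → G} {F F' F'' : FormIdeal D} {N : Subgroup G} {i j k l : Idx n}

/-- The relative elementary subgroup of level `F`: the normal closure of its root subgroups. -/
def relElementary (T : Idx n → Idx n → A → G) (F : FormIdeal D) : Subgroup G :=
  Subgroup.normalClosure (rootSpan (rootSubgroup T F) (rootSystem n))

instance : (relElementary T F).Normal := Subgroup.normalClosure_normal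

theorem mem_relElementary (h : i ≠ j) {a : A} (ha : a ∈ F.coeff i j) :
    T i j a ∈ relElementary T F :=
  Subgroup.subset_normalClosure
    (le_rootSpan (root_mem_rootSystem h) (mem_rootSubgroup_of_mem_coeff h ha))

theorem mem_relElementary_short (h : i.1 ≠ j.1) {a : A} (ha : a ∈ F.I) :
    T i j a ∈ relElementary T F :=
  mem_relElementary (ne_of_fst_ne h) ((mem_coeff_short h).2 ha)

theorem mem_relElementary_long {g : A} (hg : g ∈ F.Gamma) :
    T i i.neg (D.longScale i * g) ∈ relElementary T F :=
  mem_relElementary (neg_ne i).symm (longScale_mul_mem_coeff hg)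

theorem relElementary_le [N.Normal] :
    relElementary T F ≤ N ↔ ∀ i j, i ≠ j → ∀ a ∈ F.coeff i j, T i j a ∈ N := by
  refine ⟨fun h i j hij a ha => h (mem_relElementary hij ha), fun h => ?_⟩
  refine Subgroup.normalClosure_le_normal (rootSpan_le.2 fun v _ => (Subgroup.closure_le _).2 ?_)
  rintro _ ⟨i, j, hij, -, a, ha, rfl⟩
  exact h i j hij a ha

theorem relElementary_le_of_short_of_long [N.Normal]
    (hshort : ∀ {i j : Idx n}, i.1 ≠ j.1 → ∀ c ∈ F.I, T i j c ∈ N)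
    (hlong : ∀ i : Idx n, ∀ g ∈ F.Gamma, T i i.neg (D.longScale i * g) ∈ N) :
    relElementary T F ≤ N := by
  refine relElementary_le.2 fun i j hij a ha => ?_
  by_cases h : j = i.neg
  · subst h
    obtain ⟨g, hg, rfl⟩ := mem_coeff_long.1 ha
    exact hlong i g hg
  · have hij' := fst_ne hij h
    exact hshort hij' a ((mem_coeff_short hij').1 ha)

theorem commutatorElement_mem_of_left_mem [N.Normal] {x y : G} (hx : x ∈ N) : ⁅x, y⁆ ∈ N :=
  Subgroup.commutator_le_left N ⊤ (Subgroup.commutator_mem_commutator hx (Subgroup.mem_top y))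

namespace UnitaryRelations

variable (U : UnitaryRelations D T)
include U

/-- The coefficients of the transvections `T_{ij}` which lie in `N`. -/
def coeffIn (N : Subgroup G) (h : i ≠ j) : AddSubgroup A where
  carrier := {a | a ∈ (top D).coeff i j ∧ T i j a ∈ N}
  add_mem' := fun ⟨ha, haN⟩ ⟨hb, hbN⟩ =>
    ⟨add_mem ha hb, U.add h ha hb ▸ mul_mem haN hbN⟩
  zero_mem' := ⟨zero_mem _, U.zero h ▸ one_mem N⟩
  neg_mem' := fun ⟨ha, haN⟩ => ⟨neg_mem ha, U.neg h ha ▸ inv_mem haN⟩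

theorem long_mem_of_commutatorElement_mem (h : i.1 ≠ k.1) {a g : A} (hg : g ∈ D.Lambda)
    (hshort : T i k.neg (D.longScale k * (a * g)) ∈ N)
    (hcomm : ⁅T i k a, T k k.neg (D.longScale k * g)⁆ ∈ N) :
    T i i.neg (D.longScale i * (a * g * D.bar a)) ∈ N := by
  rwa [U.commutator_long h a hg, mul_mem_cancel_left hshort] at hcomm

section SymmetrisedProduct

theorem short_mem_commutator_relElementary (hn : 3 ≤ n) (h : i.1 ≠ j.1) {c : A}
    (hc : c ∈ (F.symProd F').I) : T i j c ∈ ⁅relElementary T F, relElementary T F'⁆ := by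
  obtain ⟨k, hik, hjk⟩ := exists_fst_ne_fst_ne hn i j
  suffices hle : symI F.I F'.I ≤
      U.coeffIn ⁅relElementary T F, relElementary T F'⁆ (ne_of_fst_ne h) from (hle hc).2
  refine symI_le.2 ⟨fun a ha b hb => ⟨mem_top_coeff_short h _, ?_⟩,
    fun a ha b hb => ⟨mem_top_coeff_short h _, ?_⟩⟩ <;>
    rw [← U.commutator_of_ne hik hjk.symm h]
  · exact Subgroup.commutator_mem_commutator (mem_relElementary_short hik ha)
      (mem_relElementary_short hjk.symm hb)
  · rw [Subgroup.commutator_comm]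
    exact Subgroup.commutator_mem_commutator (mem_relElementary_short hik ha)
      (mem_relElementary_short hjk.symm hb)

theorem long_sub_bar_mem_commutator_relElementary (hn : 3 ≤ n) {a : A}
    (ha : a ∈ (F.symProd F').I) :
    T i i.neg (D.longScale i * (a - D.lam * D.bar a)) ∈
      ⁅relElementary T F, relElementary T F'⁆ := by
  obtain ⟨k, hik, -⟩ := exists_fst_ne_fst_ne hn i i
  have hswap : D.longSwap i a ∈ (F.symProd F').I := by
    unfold longSwap
    split_ifs
    exacts [neg_mem ((F.symProd F').bar_mem a ha), ha]
  have hcomm := U.commutator_opposite hik (D.longSwap i a) 1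
  rw [mul_one, add_flip_eq, longSwap_longSwap] at hcomm
  rw [← hcomm]
  exact commutatorElement_mem_of_left_mem (U.short_mem_commutator_relElementary hn hik hswap)

theorem long_mem_commutator_relElementary (hn : 3 ≤ n) {g : A} (hg : g ∈ (F.symProd F').Gamma) :
    T i i.neg (D.longScale i * g) ∈ ⁅relElementary T F, relElementary T F'⁆ := by
  obtain ⟨k, hik, -⟩ := exists_fst_ne_fst_ne hn i i
  set C := ⁅relElementary T F, relElementary T F'⁆
  suffices hle : D.symG F.I F.Gamma F'.I F'.Gamma ≤
      (U.coeffIn C (neg_ne i).symm).comap (AddMonoidHom.mulLeft (D.longScale i)) from (hle hg).2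
  have hmem : ∀ {g : A}, g ∈ D.Lambda → T i i.neg (D.longScale i * g) ∈ C →
      g ∈ (U.coeffIn C (neg_ne i).symm).comap (AddMonoidHom.mulLeft (D.longScale i)) :=
    fun hg hC => ⟨longScale_mul_mem_coeff (F := top D) hg, hC⟩
  have hconj : ∀ {a g : A}, g ∈ D.Lambda → a * g ∈ (F.symProd F').I →
      ⁅T i k a, T k k.neg (D.longScale k * g)⁆ ∈ C →
      a * g * D.bar a ∈
        (U.coeffIn C (neg_ne i).symm).comap (AddMonoidHom.mulLeft (D.longScale i)) :=
    fun hg hag hcomm => hmem (D.lambda_conj _ _ hg) <|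
      U.long_mem_of_commutatorElement_mem hik hg (U.short_mem_commutator_relElementary hn
        (j := k.neg) hik ((F.symProd F').mul_mem_left _ _ hag)) hcomm
  refine symG_le.2 ⟨gammaMin_le_iff.2 ⟨fun a ha => ?_, fun a ha c hc => ?_⟩,
    fun b hb g hg => ?_, fun a ha g hg => ?_⟩
  · exact hmem (D.lambdaMin_mem a) (U.long_sub_bar_mem_commutator_relElementary hn ha)
  · exact hconj hc ((F.symProd F').mul_mem_right _ _ ha) <|
      commutatorElement_mem_of_left_mem (U.short_mem_commutator_relElementary hn hik ha)
  · exact hconj (F.gamma_le_Lambda hg) (mul_mem_symI' hb (F.gamma_le_I hg)) <|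
      commutatorElement_mem_comm.1 <| Subgroup.commutator_mem_commutator
        (mem_relElementary_long hg) (mem_relElementary_short hik hb)
  · exact hconj (F'.gamma_le_Lambda hg) (mul_mem_symI ha (F'.gamma_le_I hg)) <|
      Subgroup.commutator_mem_commutator (mem_relElementary_short hik ha)
        (mem_relElementary_long hg)

theorem relElementary_symProd_le (hn : 3 ≤ n) :
    relElementary T (F.symProd F') ≤ ⁅relElementary T F, relElementary T F'⁆ :=
  relElementary_le_of_short_of_long
    (fun hij _ hc => U.short_mem_commutator_relElementary hn hij hc)
    fun _ _ hg => U.long_mem_commutator_relElementary hn hg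

end SymmetrisedProduct

section NormalGeneration

theorem short_mem_neg_neg (hjk : j.1 ≠ k.1) (h : ∀ c ∈ F.I, T j k c ∈ N) :
    ∀ c ∈ F.I, T k.neg j.neg c ∈ N := by
  intro c hc
  have hkj : k.neg.1 ≠ j.neg.1 := hjk.symm
  have hc' := flip_mem_coeff (ne_of_fst_ne hkj) ((mem_coeff_short hkj).2 hc)
  rw [← U.flip (ne_of_fst_ne hkj) (mem_top_coeff_short hkj c)]
  rw [Idx.neg_neg, Idx.neg_neg] at hc' ⊢
  exact h _ ((mem_coeff_short hjk).1 hc')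

variable [N.Normal]

theorem short_mem_of_short_right (hn : 3 ≤ n) (hjk : j.1 ≠ k.1) (hjl : j.1 ≠ l.1)
    (h : ∀ c ∈ F.I, T j k c ∈ N) : ∀ c ∈ F.I, T j l c ∈ N := by
  have hne : ∀ {k l : Idx n}, j.1 ≠ k.1 → j.1 ≠ l.1 → k.1 ≠ l.1 → (∀ c ∈ F.I, T j k c ∈ N) →
      ∀ c ∈ F.I, T j l c ∈ N := by
    intro k l hjk hjl hkl h c hc
    rw [← mul_one c, ← U.commutator_of_ne hjk hkl hjl]
    exact commutatorElement_mem_of_left_mem (h c hc)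
  obtain ⟨m, hjm, hkm⟩ := exists_fst_ne_fst_ne hn j k
  by_cases hkl : k.1 = l.1
  · exact hne hjm hjl (hkl ▸ hkm.symm) (hne hjk hjm hkm h)
  · exact hne hjk hjl hkl h

theorem short_mem_of_short_left (hn : 3 ≤ n) (hjk : j.1 ≠ k.1) (hlk : l.1 ≠ k.1)
    (h : ∀ c ∈ F.I, T j k c ∈ N) : ∀ c ∈ F.I, T l k c ∈ N := by
  have hneg := U.short_mem_of_short_right hn (j := k.neg) (k := j.neg) (l := l.neg) hjk.symm
    hlk.symm (U.short_mem_neg_neg hjk h)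
  simpa only [Idx.neg_neg] using U.short_mem_neg_neg (j := k.neg) (k := l.neg) hlk.symm hneg

theorem short_mem_of_short (hn : 3 ≤ n) (hij : i.1 ≠ j.1) (hkl : k.1 ≠ l.1)
    (h : ∀ c ∈ F.I, T i j c ∈ N) : ∀ c ∈ F.I, T k l c ∈ N := by
  obtain ⟨m, him, hkm⟩ := exists_fst_ne_fst_ne hn i k
  exact U.short_mem_of_short_right hn hkm hkl
    (U.short_mem_of_short_left hn him hkm (U.short_mem_of_short_right hn hij him h))

theorem long_mem_of_long (h : i.1 ≠ k.1) (hshort : ∀ c ∈ F.I, T i k.neg c ∈ N)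
    (hlong : ∀ g ∈ F.Gamma, T k k.neg (D.longScale k * g) ∈ N) :
    ∀ g ∈ F.Gamma, T i i.neg (D.longScale i * g) ∈ N := by
  intro g hg
  have hmem := U.long_mem_of_commutatorElement_mem h (a := 1) (F.gamma_le_Lambda hg)
    (hshort _ (F.mul_mem_left _ _ (F.mul_mem_left _ _ (F.gamma_le_I hg))))
    (commutatorElement_mem_comm.1 (commutatorElement_mem_of_left_mem (hlong g hg)))
  rwa [one_mul, D.bar_one, mul_one] at hmem

theorem relElementary_le_of_mem (hn : 3 ≤ n) (hjk : j.1 ≠ k.1) (hshort : ∀ c ∈ F.I, T j k c ∈ N)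
    (hlong : ∀ g ∈ F.Gamma, T l l.neg (D.longScale l * g) ∈ N) : relElementary T F ≤ N := by
  have hshort' : ∀ {p q : Idx n}, p.1 ≠ q.1 → ∀ c ∈ F.I, T p q c ∈ N :=
    fun hpq => U.short_mem_of_short hn hjk hpq hshort
  refine relElementary_le_of_short_of_long hshort' fun i => ?_
  obtain ⟨m, him, hlm⟩ := exists_fst_ne_fst_ne hn i l
  exact U.long_mem_of_long him (hshort' (q := m.neg) him)
    (U.long_mem_of_long hlm.symm (hshort' (q := l.neg) hlm.symm) hlong)

end NormalGeneration

section TripleCommutators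

theorem commute_of_fst_ne (hij : i ≠ j) (hkl : k ≠ l) (hik : i.1 ≠ k.1) (hil : i.1 ≠ l.1)
    (hjk : j.1 ≠ k.1) (hjl : j.1 ≠ l.1) {a b : A} (ha : a ∈ F.coeff i j) (hb : b ∈ F'.coeff k l) :
    Commute (T i j a) (T k l b) :=
  U.commute hij hkl (ne_of_fst_ne hjk) (ne_neg_of_fst_ne hjl.symm) (ne_neg_of_fst_ne hik)
    (ne_of_fst_ne hil) (coeff_le_top _ _ ha) (coeff_le_top _ _ hb)

theorem commutatorElement_elemCommutator_of_fst_ne (hij : i ≠ j) (hkl : k ≠ l) (hik : i.1 ≠ k.1)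
    (hil : i.1 ≠ l.1) (hjk : j.1 ≠ k.1) (hjl : j.1 ≠ l.1) {a b c : A} (ha : a ∈ F.coeff i j)
    (hb : b ∈ F'.coeff j i) (hc : c ∈ F''.coeff k l) :
    ⁅T k l c, ⁅T i j a, T j i b⁆⁆ = 1 := by
  have hx := (U.commute_of_fst_ne hij hkl hik hil hjk hjl ha hc).symm
  have hy := (U.commute_of_fst_ne hij.symm hkl hjk hjl hik hil hb hc).symm
  exact (((hx.mul_right hy).mul_right hx.inv_right).mul_right hy.inv_right).commutator_eq

/-- The double commutator of the transvections with coefficients `c`, `-a` and `b` only involves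
their product, and `b * (-a)` is a coefficient of level `F ∘ F'`. -/
theorem commutatorElement_elemCommutator_short_mem (hij : i.1 ≠ j.1) (hik : i.1 ≠ k.1)
    (hjk : j.1 ≠ k.1) {a b c : A} (ha : a ∈ F.I) (hb : b ∈ F'.I) (hc : c ∈ F''.I) :
    ⁅T j k c, ⁅T i j a, T j i b⁆⁆ ∈ ⁅relElementary T (F.symProd F'), relElementary T F''⁆ := by
  have htop : ∀ {i j : Idx n}, i.1 ≠ j.1 → ∀ a, a ∈ (top D).coeff i j := mem_top_coeff_short
  have hyg : ⁅(T j i b)⁻¹, T j k c⁆ = 1 :=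
    (U.commute (ne_of_fst_ne hij.symm) (ne_of_fst_ne hjk) (ne_of_fst_ne hij)
      (ne_neg_of_fst_ne hik.symm) (neg_ne j).symm (ne_of_fst_ne hjk) (htop hij.symm b)
      (htop hjk c)).inv_left.commutator_eq
  refine commutatorElement_commutatorElement_mem ?_ ?_ ?_
  · rw [← U.neg (ne_of_fst_ne hij) (htop hij a), U.commutator_of_ne hij hjk hik,
      commutatorElement_mem_comm, U.commutator_of_ne hij.symm hik hjk, ← mul_assoc,
      ← U.commutator_of_ne hij.symm hik hjk]
    exact Subgroup.commutator_mem_commutator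
      (mem_relElementary_short hij.symm (mul_mem_symI' hb (neg_mem ha)))
      (mem_relElementary_short hik hc)
  · rw [hyg, commutatorElement_one_right]
    exact one_mem _
  · rw [hyg, commutatorElement_one_right]
    exact one_mem _

theorem relElementary_le_centralizerMod_short (hn : 3 ≤ n) (hij : i.1 ≠ j.1) {a b : A}
    (ha : a ∈ F.I) (hb : b ∈ F'.I)
    (hcentral : ∀ g : G, ⁅g, ⁅T i j a, T j i b⁆⁆ ∈ relElementary T (F.symProd F')) :
    relElementary T F'' ≤ centralizerMod ⁅relElementary T (F.symProd F'), relElementary T F''⁆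
      ⁅T i j a, T j i b⁆ := by
  have := normal_inf_centralizerMod (R := relElementary T F'') le_rfl hcentral
  obtain ⟨k, hik, hjk⟩ := exists_fst_ne_fst_ne hn i j
  set N := relElementary T F'' ⊓ centralizerMod
    ⁅relElementary T (F.symProd F'), relElementary T F''⁆ ⁅T i j a, T j i b⁆
  have hshort : ∀ c ∈ F''.I, T j k c ∈ N := fun c hc =>
    ⟨mem_relElementary_short hjk hc, mem_centralizerMod_iff.2 <|
      U.commutatorElement_elemCommutator_short_mem hij hik hjk ha hb hc⟩
  refine (U.relElementary_le_of_mem hn hjk hshort (l := k) fun g hg =>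
    ⟨mem_relElementary_long hg, mem_centralizerMod_iff.2 ?_⟩).trans inf_le_right
  rw [U.commutatorElement_elemCommutator_of_fst_ne (ne_of_fst_ne hij) (neg_ne k).symm hik hik
    hjk hjk ((mem_coeff_short hij).2 ha) ((mem_coeff_short hij.symm).2 hb)
    (longScale_mul_mem_coeff hg)]
  exact one_mem _

theorem relElementary_le_centralizerMod_long (hn : 3 ≤ n) {a b : A} (ha : a ∈ F.coeff i i.neg)
    (hb : b ∈ F'.coeff i.neg i)
    (hcentral : ∀ g : G, ⁅g, ⁅T i i.neg a, T i.neg i b⁆⁆ ∈ relElementary T (F.symProd F')) :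
    relElementary T F'' ≤ centralizerMod ⁅relElementary T (F.symProd F'), relElementary T F''⁆
      ⁅T i i.neg a, T i.neg i b⁆ := by
  have := normal_inf_centralizerMod (R := relElementary T F'') le_rfl hcentral
  obtain ⟨k, hik, -⟩ := exists_fst_ne_fst_ne hn i i
  obtain ⟨l, hil, hkl⟩ := exists_fst_ne_fst_ne hn i k
  have hcomm : ∀ {p q : Idx n}, p ≠ q → i.1 ≠ p.1 → i.1 ≠ q.1 → ∀ c ∈ F''.coeff p q,
      T p q c ∈ relElementary T F'' ⊓ centralizerMod
        ⁅relElementary T (F.symProd F'), relElementary T F''⁆ ⁅T i i.neg a, T i.neg i b⁆ := by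
    refine fun hpq hip hiq c hc => ⟨mem_relElementary hpq hc, mem_centralizerMod_iff.2 ?_⟩
    rw [U.commutatorElement_elemCommutator_of_fst_ne (neg_ne i).symm hpq hip hiq hip hiq ha hb hc]
    exact one_mem _
  exact (U.relElementary_le_of_mem hn hkl
    (fun c hc => hcomm (ne_of_fst_ne hkl) hik hil c ((mem_coeff_short hkl).2 hc)) (l := k)
    fun g hg => hcomm (neg_ne k).symm hik hik _ (longScale_mul_mem_coeff hg)).trans inf_le_right

theorem commutator_elemCommutators_relElementary_le (hn : 3 ≤ n)
    (hcentral : ⁅elemCommutators (rootSystem n) (rootSubgroup T F) (rootSubgroup T F'), ⊤⁆ ≤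
      relElementary T (F.symProd F')) :
    ⁅elemCommutators (rootSystem n) (rootSubgroup T F) (rootSubgroup T F'), relElementary T F''⁆ ≤
      ⁅relElementary T (F.symProd F'), relElementary T F''⁆ := by
  refine commutator_rootSpan_le_left fun β hβ => ?_
  rw [commutator_le_iff_le_centralizerMod]
  refine fun z hz => Subgroup.commutator_le.2 fun x hx y hy => ?_
  rw [mem_centralizerMod_iff, commutatorElement_mem_comm, ← mem_centralizerMod_iff]
  suffices h : relElementary T F'' ≤
      centralizerMod ⁅relElementary T (F.symProd F'), relElementary T F''⁆ ⁅x, y⁆ from h hz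
  have hxy : ∀ g : G, ⁅g, ⁅x, y⁆⁆ ∈ relElementary T (F.symProd F') := fun g =>
    commutatorElement_mem_comm.1 <| hcentral <| Subgroup.commutator_mem_commutator
      (le_rootSpan (X := fun β => ⁅rootSubgroup T F β, rootSubgroup T F' (-β)⁆) hβ
        (Subgroup.commutator_mem_commutator hx hy)) (Subgroup.mem_top g)
  obtain ⟨i, j, hij, rfl⟩ := hβ
  rw [neg_root] at hy
  obtain ⟨a, ha, rfl⟩ := (U.mem_rootSubgroup hij).1 hx
  obtain ⟨b, hb, rfl⟩ := (U.mem_rootSubgroup hij.symm).1 hy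
  by_cases h : j = i.neg
  · subst h
    exact U.relElementary_le_centralizerMod_long hn ha hb hxy
  · have hij' := fst_ne hij h
    exact U.relElementary_le_centralizerMod_short hn hij' ((mem_coeff_short hij').1 ha)
      ((mem_coeff_short hij'.symm).1 hb) hxy

theorem commutator_commutator_relElementary (hn : 3 ≤ n) (F F' F'' : FormIdeal D) :
    ⁅⁅relElementary T F, relElementary T F'⁆, relElementary T F''⁆ =
      ⁅relElementary T (F.symProd F'), relElementary T F''⁆ := by
  refine le_antisymm ?_ (Subgroup.commutator_mono (U.relElementary_symProd_le hn) le_rfl)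
  have hX := U.relRootGroups_rootSubgroup hn (top D)
  have hF := U.relRootGroups_rootSubgroup hn F
  have hF' := U.relRootGroups_rootSubgroup hn F'
  have hL : ∀ α ∈ rootSystem n, ∀ β ∈ rootSystem n, α + β ≠ 0 →
      ⁅rootSubgroup T F α, rootSubgroup T F' β⁆ ≤ relElementary T (F.symProd F') :=
    fun α hα β hβ hαβ => (U.commutator_rootSubgroup_le hα hβ hαβ).trans
      ((rootSpan_mono posComb_subset).trans Subgroup.subset_normalClosure)
  refine (Subgroup.commutator_mono
    (hX.commutator_normalClosure_le_sup_elemCommutators hF hF' hL) le_rfl).trans ?_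
  rw [commutator_le_iff_le_centralizerMod]
  refine fun z hz => sup_le ?_ ?_
  · exact commutator_le_iff_le_centralizerMod.1 le_rfl z hz
  · exact commutator_le_iff_le_centralizerMod.1 (U.commutator_elemCommutators_relElementary_le hn
      (hX.commutator_elemCommutators_le hF hF' hL)) z hz

end TripleCommutators

end UnitaryRelations

theorem normal_comap_subtype_EU (F : FormIdeal D) :
    ((D.EU n F.I F.Gamma).comap (D.EUmax n).subtype).Normal where
  conj_mem x hx h := by
    suffices hle : D.EU n F.I F.Gamma ≤
        (D.EU n F.I F.Gamma).comap (MulAut.conj (h : GLn A n)).toMonoidHom from hle hx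
    refine (Subgroup.closure_le _).2 ?_
    rintro _ ⟨g, hg, t, ht, rfl⟩
    exact Subgroup.subset_closure ⟨h * g, mul_mem h.2 hg, t, ht, by simp [mul_assoc]⟩

theorem map_relElementary_transvection (F : FormIdeal D) :
    (relElementary D.transvection F).map (D.EUmax n).subtype = D.EU n F.I F.Gamma := by
  refine le_antisymm (Subgroup.map_le_iff_le_comap.2 ?_) ((Subgroup.closure_le _).2 ?_)
  · have := normal_comap_subtype_EU (n := n) F
    refine relElementary_le.2 fun i j hij a ha => Subgroup.subset_closure
      ⟨1, one_mem _, _, ?_, (by rw [one_mul, inv_one, mul_one])⟩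
    rw [transvGen_eq]
    exact ⟨i, j, hij, a, ha, (coe_transvection hij (coeff_le_top _ _ ha)).symm⟩
  · rintro _ ⟨g, hg, t, ht, rfl⟩
    rw [transvGen_eq] at ht
    obtain ⟨i, j, hij, a, ha, rfl⟩ := ht
    refine ⟨⟨g, hg⟩ * D.transvection i j a * ⟨g, hg⟩⁻¹,
      Subgroup.Normal.conj_mem inferInstance _ (mem_relElementary hij ha) _, ?_⟩
    simp [coe_transvection hij (coeff_le_top _ _ ha)]

end RelativeElementary

/-- Lemma 14 (triple commutators):
`[[EU(2n,I,Γ), EU(2n,J,Δ)], EU(2n,K,Θ)] = [EU(2n,(I,Γ)∘(J,Δ)), EU(2n,K,Θ)]`. -/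
theorem statement17 {A : Type*} [Ring A] (D : FormRingData A) (n : ℕ) (hn : 3 ≤ n)
    (FI FJ FK : FormIdeal D) :
    ⁅⁅D.EU n FI.I FI.Gamma, D.EU n FJ.I FJ.Gamma⁆, D.EU n FK.I FK.Gamma⁆ =
      ⁅D.EUsym n FI.I FI.Gamma FJ.I FJ.Gamma, D.EU n FK.I FK.Gamma⁆ := by
  have h := congrArg (Subgroup.map (D.EUmax n).subtype)
    ((FormRingData.unitaryRelations_transvection D n).commutator_commutator_relElementary
      hn FI FJ FK)
  simp only [Subgroup.map_commutator, map_relElementary_transvection] at h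
  exact h
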